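/- Assume the Riemann Hypothesis. Let g : ℂ → ℂ be analytic on the open disk {s : |s| < 1/2} with g(s) = −ζ'(s+1)/ζ(s+1) − 1/s for 0 < |s| < 1/2, and set η_l = g^{(l)}(0)/l! for l ≥ 0. Then there exists a constant C > 0 such that for all integers n ≥ 2, | Σ_{l=1}^{n} C(n,l) η_{l−1} | ≤ C √n log n. -/

import Mathlib

open Complex Finset

/-!
Put `F s = s ζ(1 + s)`, an entire function with `F 0 = 1`. Near `0` the given `g` equals `-F'/F`,
so the sum is `-Lₙ(F'/F)` for the functional `Lₙ f = ∑ₗ C(n,l) f⁽ˡ⁻¹⁾(0) / (l-1)!`.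

Take a circle with centre `n` and radius `R` between `n + 7/10` and `n + 4/5` that avoids the zeros
of `F`. Differentiating the Poisson–Jensen formula at `0` writes `Lₙ(F'/F)` as the circle average
of `log|F p|` against the weight `2 (p - n) (n/p²) (1 + 1/p)ⁿ⁻¹`, plus `(1 + 1/ρ*)ⁿ - (1 + 1/ρ)ⁿ`
for each enclosed zero `ρ`, where `ρ*` is the inversion of `ρ` in the circle. Under RH every such
term is at most `40 n log(R/|ρ - n|)`, and by Jensen's formula these logarithms add up to the gap
between the average of `log|F|` and `log|F n|`.

On the circle the weight is `O(n)`, and `log|ζ(p + 1)| ≤ V / (1 + Re(p - n) + R)` with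
`V = O(log n)`. Comparison with the Poisson kernel at `n - (R - √R)` bounds the average of the
right-hand side by `2 V/√R`. The average of `log|ζ|` itself is at least `-O(1/n)`, because the gap
is nonnegative, so both contributions are `O(n V/√R) = O(√n log n)`.
-/

section ZetaGrowth

open Filter Topology

lemma hasDerivAt_ofReal_cpow {t : ℝ} (ht : 0 < t) (r : ℂ) :
    HasDerivAt (fun t : ℝ ↦ (t : ℂ) ^ r) (r * (t : ℂ) ^ (r - 1)) t := by
  simpa using ((hasDerivAt_id (t : ℂ)).cpow_const (c := r) (by simpa)).comp_ofReal

lemma norm_cpow_neg_sub_cpow_neg_le {a x : ℝ} (ha : 0 < a) (hax : a ≤ x) {w : ℂ}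
    (hw : -1 ≤ w.re) :
    ‖(x : ℂ) ^ (-w) - (a : ℂ) ^ (-w)‖ ≤ ‖w‖ * a ^ (-w.re - 1) * (x - a) := by
  have hderiv : ∀ t ∈ Set.Icc a x, HasDerivWithinAt (fun t : ℝ ↦ (t : ℂ) ^ (-w))
      (-w * (t : ℂ) ^ (-w - 1)) (Set.Icc a x) t := fun t ht ↦
    (hasDerivAt_ofReal_cpow (ha.trans_le ht.1) _).hasDerivWithinAt
  refine (Convex.norm_image_sub_le_of_norm_hasDerivWithin_le hderiv (fun t ht ↦ ?_)
    (convex_Icc a x) (Set.left_mem_Icc.2 hax) (Set.right_mem_Icc.2 hax)).trans_eq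
      (by rw [Real.norm_of_nonneg (sub_nonneg.2 hax)])
  rw [norm_mul, norm_neg, norm_cpow_eq_rpow_re_of_pos (ha.trans_le ht.1)]
  gcongr ‖w‖ * ?_
  simpa using Real.rpow_le_rpow_of_nonpos ha ht.1 (by linarith)

lemma norm_cpow_one_sub_taylor_le {a x : ℝ} (ha : 0 < a) (hax : a ≤ x) {w : ℂ}
    (hw : -1 ≤ w.re) :
    ‖(x : ℂ) ^ (1 - w) - (a : ℂ) ^ (1 - w) - (x - a) * ((1 - w) * (a : ℂ) ^ (-w))‖ ≤
      ‖w - 1‖ * ‖w‖ * a ^ (-w.re - 1) * (x - a) ^ 2 := by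
  have hderiv : ∀ t ∈ Set.Icc a x, HasDerivWithinAt
      (fun t : ℝ ↦ (t : ℂ) ^ (1 - w) - t * ((1 - w) * (a : ℂ) ^ (-w)))
      ((1 - w) * ((t : ℂ) ^ (-w) - (a : ℂ) ^ (-w))) (Set.Icc a x) t := fun t ht ↦ by
    have h := (hasDerivAt_ofReal_cpow (ha.trans_le ht.1) (1 - w)).sub
      ((hasDerivAt_id t).ofReal_comp.mul_const ((1 - w) * (a : ℂ) ^ (-w)))
    refine (h.congr_deriv ?_).hasDerivWithinAt
    rw [sub_sub_cancel_left, ofReal_one]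
    ring
  have h := Convex.norm_image_sub_le_of_norm_hasDerivWithin_le
    (C := ‖w - 1‖ * (‖w‖ * a ^ (-w.re - 1) * (x - a))) hderiv (fun t ht ↦ ?_)
    (convex_Icc a x) (Set.left_mem_Icc.2 hax) (Set.right_mem_Icc.2 hax)
  · rw [Real.norm_of_nonneg (sub_nonneg.2 hax)] at h
    convert h using 1
    · congr 1; ring
    · ring
  · rw [norm_mul, norm_sub_rev 1 w]
    gcongr
    refine (norm_cpow_neg_sub_cpow_neg_le ha ht.1 hw).trans ?_
    gcongr
    exact ht.2

/-- The terms of the series `(w - 1) ζ(w) = 1 + ∑ₖ zetaIncrement k w`, which converges for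
`0 < re w` because each term is a first-order Taylor remainder of `t ↦ t ^ (1 - w)`. -/
noncomputable def zetaIncrement (k : ℕ) (w : ℂ) : ℂ :=
  (w - 1) * (k + 1 : ℂ) ^ (-w) - (k + 1 : ℂ) ^ (1 - w) + (k + 2 : ℂ) ^ (1 - w)

lemma norm_zetaIncrement_le (k : ℕ) {w : ℂ} (hw : -1 ≤ w.re) :
    ‖zetaIncrement k w‖ ≤ ‖w - 1‖ * ‖w‖ * (k + 1 : ℝ) ^ (-w.re - 1) := by
  have h := norm_cpow_one_sub_taylor_le (a := k + 1) (x := k + 2) (by positivity)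
    (by linarith) hw
  rw [show (k + 2 : ℝ) - (k + 1) = 1 by ring, one_pow, mul_one] at h
  refine (congrArg norm ?_).trans_le h
  rw [zetaIncrement]
  push_cast
  ring

lemma differentiable_zetaIncrement (k : ℕ) : Differentiable ℂ (zetaIncrement k) := by
  have hk₁ : (k + 1 : ℂ) ≠ 0 := by exact_mod_cast k.succ_ne_zero
  have hk₂ : (k + 2 : ℂ) ≠ 0 := by exact_mod_cast (k + 1).succ_ne_zero
  intro w
  unfold zetaIncrement
  fun_prop (disch := simp [hk₁, hk₂])

lemma summable_nat_add_one_rpow {σ : ℝ} (hσ : 0 < σ) :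
    Summable fun k : ℕ ↦ (k + 1 : ℝ) ^ (-σ - 1) := by
  simpa using (summable_nat_add_iff 1).2 (Real.summable_nat_rpow.2 (by linarith : -σ - 1 < -1))

lemma summable_zetaIncrement {w : ℂ} (hw : 0 < w.re) : Summable (zetaIncrement · w) :=
  .of_norm_bounded ((summable_nat_add_one_rpow hw).mul_left (‖w - 1‖ * ‖w‖))
    fun k ↦ norm_zetaIncrement_le k (by linarith)

lemma sum_range_zetaIncrement (N : ℕ) (w : ℂ) :
    ∑ k ∈ range N, zetaIncrement k w =
      (w - 1) * ∑ k ∈ range N, (k + 1 : ℂ) ^ (-w) - 1 + (N + 1 : ℂ) ^ (1 - w) := by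
  induction N with
  | zero => simp
  | succ N ih =>
    rw [sum_range_succ, sum_range_succ, ih, zetaIncrement]
    push_cast
    rw [add_assoc (N : ℂ) 1 1, one_add_one_eq_two]
    ring

lemma hasSum_nat_add_one_cpow_neg {w : ℂ} (hw : 1 < w.re) :
    HasSum (fun k : ℕ ↦ (k + 1 : ℂ) ^ (-w)) (riemannZeta w) := by
  rw [zeta_eq_tsum_one_div_nat_add_one_cpow hw]
  have h := (summable_nat_add_iff 1).2 (summable_one_div_nat_cpow.2 hw)
  simpa [cpow_neg] using h.hasSum

lemma tendsto_nat_add_one_cpow_zero {z : ℂ} (hz : z.re < 0) :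
    Tendsto (fun N : ℕ ↦ (N + 1 : ℂ) ^ z) atTop (𝓝 0) := by
  rw [tendsto_zero_iff_norm_tendsto_zero]
  have hnorm (N : ℕ) : ‖(N + 1 : ℂ) ^ z‖ = ((N + 1 : ℕ) : ℝ) ^ (- -z.re) := by
    rw [neg_neg, ← norm_natCast_cpow_of_pos N.succ_pos, Nat.cast_succ]
  simp_rw [hnorm]
  exact ((tendsto_rpow_neg_atTop (neg_pos.2 hz)).comp tendsto_natCast_atTop_atTop).comp
    (tendsto_add_atTop_nat 1)

lemma one_add_tsum_zetaIncrement_of_one_lt_re {w : ℂ} (hw : 1 < w.re) :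
    1 + ∑' k, zetaIncrement k w = (w - 1) * riemannZeta w := by
  have hpartial := (summable_zetaIncrement (by linarith)).hasSum.tendsto_sum_nat.congr
    fun N ↦ sum_range_zetaIncrement N w
  have hlimit := (((hasSum_nat_add_one_cpow_neg hw).tendsto_sum_nat.const_mul
    (w - 1)).sub_const 1).add (tendsto_nat_add_one_cpow_zero (z := 1 - w) (by simpa using hw))
  rw [tendsto_nhds_unique hpartial hlimit]
  ring

lemma differentiableOn_tsum_zetaIncrement :
    DifferentiableOn ℂ (fun w ↦ ∑' k, zetaIncrement k w) {w | 0 < w.re} := by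
  intro z (hz : 0 < z.re)
  set U : Set ℂ := Metric.ball 0 (‖z‖ + 1) ∩ {w | z.re / 2 < w.re}
  have hUopen : IsOpen U :=
    Metric.isOpen_ball.inter (isOpen_lt continuous_const continuous_re)
  have hzU : z ∈ U := ⟨by simp, half_lt_self hz⟩
  have hdiff : DifferentiableOn ℂ (fun w ↦ ∑' k, zetaIncrement k w) U := by
    refine differentiableOn_tsum_of_summable_norm
      (u := fun k ↦ (‖z‖ + 1 + 1) * (‖z‖ + 1) * (k + 1 : ℝ) ^ (-(z.re / 2) - 1))
      ((summable_nat_add_one_rpow (half_pos hz)).mul_left _)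
      (fun k ↦ (differentiable_zetaIncrement k).differentiableOn) hUopen fun k w hw ↦ ?_
    have hnorm : ‖w‖ ≤ ‖z‖ + 1 := (mem_ball_zero_iff.1 hw.1).le
    have hre : z.re / 2 < w.re := hw.2
    have hnorm' : ‖w - 1‖ ≤ ‖z‖ + 1 + 1 := (norm_sub_le w 1).trans (by simpa using hnorm)
    refine (norm_zetaIncrement_le k (by linarith [half_pos hz])).trans ?_
    gcongr
    · linarith [k.cast_nonneg (α := ℝ)]
  exact (hdiff.differentiableAt (hUopen.mem_nhds hzU)).differentiableWithinAt

lemma riemannZeta₁_eq_sub_one_mul {w : ℂ} (hw : w ≠ 1) :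
    riemannZeta₁ w = (w - 1) * riemannZeta w := by
  rw [riemannZeta_eq_inv_sub_mul hw, mul_inv_cancel_left₀ (sub_ne_zero.2 hw)]

lemma riemannZeta₁_eq_one_add_tsum {w : ℂ} (hw : 0 < w.re) :
    riemannZeta₁ w = 1 + ∑' k, zetaIncrement k w := by
  have hopen : IsOpen {w : ℂ | 0 < w.re} := isOpen_lt continuous_const continuous_re
  refine AnalyticOnNhd.eqOn_of_preconnected_of_eventuallyEq (z₀ := 2)
    (differentiable_riemannZeta₁.differentiableOn.analyticOnNhd hopen)
    ((differentiableOn_tsum_zetaIncrement.const_add 1).analyticOnNhd hopen)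
    (convex_halfSpace_re_gt 0).isPreconnected (by simp) ?_ hw
  filter_upwards [(isOpen_lt continuous_const continuous_re).mem_nhds
    (by simp : (2 : ℂ) ∈ {w : ℂ | 1 < w.re})] with z (hz : 1 < z.re)
  rw [one_add_tsum_zetaIncrement_of_one_lt_re hz,
    riemannZeta₁_eq_sub_one_mul (by rintro rfl; simp at hz)]

lemma exists_norm_riemannZeta₁_le {σ : ℝ} (hσ : 0 < σ) :
    ∃ C : ℝ, 1 ≤ C ∧ ∀ w : ℂ, σ ≤ w.re → ‖riemannZeta₁ w‖ ≤ C * (1 + ‖w‖) ^ 2 := by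
  set S := ∑' k : ℕ, (k + 1 : ℝ) ^ (-σ - 1)
  have hS : 0 ≤ S := tsum_nonneg fun k ↦ by positivity
  refine ⟨1 + S, by linarith, fun w hw ↦ ?_⟩
  have htsum : ‖∑' k, zetaIncrement k w‖ ≤ ‖w - 1‖ * ‖w‖ * S := by
    refine tsum_of_norm_bounded ((summable_nat_add_one_rpow hσ).hasSum.mul_left _) fun k ↦
      (norm_zetaIncrement_le k (by linarith)).trans ?_
    gcongr
    linarith [k.cast_nonneg (α := ℝ)]
  have hnorm : ‖w - 1‖ ≤ 1 + ‖w‖ := (norm_sub_le w 1).trans_eq (by rw [norm_one, add_comm])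
  rw [riemannZeta₁_eq_one_add_tsum (hσ.trans_le hw)]
  calc ‖1 + ∑' k, zetaIncrement k w‖ ≤ 1 + ‖w - 1‖ * ‖w‖ * S :=
        (norm_add_le _ _).trans (by rw [norm_one]; gcongr)
    _ ≤ (1 + ‖w‖) ^ 2 + (1 + ‖w‖) * (1 + ‖w‖) * S := by
        gcongr
        · exact one_le_pow₀ (by linarith [norm_nonneg w])
        · linarith
    _ = (1 + S) * (1 + ‖w‖) ^ 2 := by ring

lemma norm_riemannZeta_le_of_one_lt_re {w : ℂ} (hw : 1 < w.re) :
    ‖riemannZeta w‖ ≤ 1 + 1 / (w.re - 1) := by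
  have hbound := ZetaAsymptotics.zeta_limit_aux1 hw
  have hterm : 0 ≤ ZetaAsymptotics.termTSum w.re :=
    tsum_nonneg fun n ↦ ZetaAsymptotics.term_nonneg _ _
  have hnorm (k : ℕ) : ‖(k + 1 : ℂ) ^ (-w)‖ = 1 / (k + 1 : ℝ) ^ w.re := by
    rw [← Nat.cast_succ, norm_natCast_cpow_of_pos k.succ_pos, neg_re,
      Real.rpow_neg (Nat.cast_nonneg _), one_div, Nat.cast_succ]
  have hsum : Summable fun k : ℕ ↦ 1 / (k + 1 : ℝ) ^ w.re := by
    simpa using (summable_nat_add_iff 1).2 (Real.summable_one_div_nat_rpow.2 hw)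
  have htsum : ‖riemannZeta w‖ ≤ ∑' k : ℕ, 1 / (k + 1 : ℝ) ^ w.re := by
    rw [← (hasSum_nat_add_one_cpow_neg hw).tsum_eq]
    exact tsum_of_norm_bounded hsum.hasSum fun k ↦ (hnorm k).le
  nlinarith

end ZetaGrowth

section CauchyKernels

open Metric Real ComplexConjugate
open scoped Nat Topology

variable {c w : ℂ} {R : ℝ} {f : ℂ → ℂ}

lemma sub_ne_zero_of_mem_ball_of_mem_sphere (hw : w ∈ ball c R) {z : ℂ} (hz : z ∈ sphere c R) :
    z - w ≠ 0 :=
  sub_ne_zero.2 fun h ↦ (mem_ball.1 hw).ne (h ▸ mem_sphere.1 hz)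

lemma diffContOnCl_ball_of_analyticOnNhd_closedBall (hf : AnalyticOnNhd ℂ f (closedBall c R)) :
    DiffContOnCl ℂ f (ball c R) :=
  (hf.differentiableOn.mono closure_ball_subset_closedBall).diffContOnCl

lemma circleAverage_sub_center_mul (hR : 0 < R) (g : ℂ → ℂ) :
    circleAverage (fun z ↦ (z - c) * g z) c R = (2 * π * I)⁻¹ * ∮ z in C(c, R), g z := by
  rw [circleAverage_eq_circleIntegral hR.ne', smul_eq_mul]
  congr 1
  refine circleIntegral.integral_congr hR.le fun z hz ↦ ?_
  exact inv_mul_cancel_left₀ (sub_ne_zero_of_mem_ball_of_mem_sphere (mem_ball_self hR) hz) (g z)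

lemma circleIntegrable_div_sub_pow (hw : w ∈ ball c R) (hf : ContinuousOn f (sphere c R))
    (m : ℕ) : CircleIntegrable (fun z ↦ f z / (z - w) ^ m) c R :=
  (hf.div (by fun_prop) fun _ hz ↦ pow_ne_zero m
    (sub_ne_zero_of_mem_ball_of_mem_sphere hw hz)).circleIntegrable (pos_of_mem_ball hw).le

lemma circleIntegral_deriv_div_sub_pow (hf : AnalyticOnNhd ℂ f (closedBall c R))
    (hw : w ∈ ball c R) (m : ℕ) :
    ∮ z in C(c, R), deriv f z / (z - w) ^ m = m * ∮ z in C(c, R), f z / (z - w) ^ (m + 1) := by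
  have hderiv : ∀ z ∈ sphere c R, HasDerivWithinAt (fun z ↦ f z / (z - w) ^ m)
      (deriv f z / (z - w) ^ m - m * (f z / (z - w) ^ (m + 1))) (sphere c R) z := fun z hz ↦ by
    have hne := sub_ne_zero_of_mem_ball_of_mem_sphere hw hz
    have h := (hf z (sphere_subset_closedBall hz)).differentiableAt.hasDerivAt.div
      (((hasDerivAt_id z).sub_const w).pow m) (pow_ne_zero m hne)
    refine (h.congr_deriv ?_).hasDerivWithinAt
    rcases m with _ | m
    · simp
    · simp [field]
      ring
  have hf' := hf.deriv.continuousOn.mono sphere_subset_closedBall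
  have hfc := hf.continuousOn.mono sphere_subset_closedBall
  have hzero := circleIntegral.integral_eq_zero_of_hasDerivWithinAt (pos_of_mem_ball hw).le hderiv
  rwa [circleIntegral.integral_sub (circleIntegrable_div_sub_pow hw hf' m)
    (by simpa only [smul_eq_mul] using
      (circleIntegrable_div_sub_pow hw hfc (m + 1)).const_fun_smul (a := (m : ℂ))),
    circleIntegral.integral_const_mul, sub_eq_zero] at hzero

lemma circleIntegral_div_sub_pow (hf : AnalyticOnNhd ℂ f (closedBall c R))
    (hw : w ∈ ball c R) (k : ℕ) :
    ∮ z in C(c, R), f z / (z - w) ^ (k + 1) = 2 * π * I * (iteratedDeriv k f w / k !) := by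
  induction k generalizing f with
  | zero =>
    simpa [div_eq_inv_mul] using
      (diffContOnCl_ball_of_analyticOnNhd_closedBall hf).circleIntegral_sub_inv_smul hw
  | succ k ih =>
    have h := circleIntegral_deriv_div_sub_pow hf hw (k + 1)
    rw [ih hf.deriv, ← iteratedDeriv_succ'] at h
    have hk : ((k + 1 : ℕ) : ℂ) ≠ 0 := by exact_mod_cast k.succ_ne_zero
    rw [Nat.factorial_succ, Nat.cast_mul, mul_comm ((k + 1 : ℕ) : ℂ), ← div_div, ← mul_div_assoc,
      eq_div_iff hk, mul_comm, h]

lemma circleAverage_div_sub_pow_mul (hf : AnalyticOnNhd ℂ f (closedBall c R))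
    (hw : w ∈ ball c R) (k : ℕ) :
    circleAverage (fun z ↦ (z - c) / (z - w) ^ (k + 1) * f z) c R =
      iteratedDeriv k f w / k ! := by
  simp_rw [div_mul_eq_mul_div, mul_div_assoc]
  rw [circleAverage_sub_center_mul (pos_of_mem_ball hw), circleIntegral_div_sub_pow hf hw,
    inv_mul_cancel_left₀ two_pi_I_ne_zero]

lemma sq_sub_conj_mul_sub_ne_zero (hw : w ∈ ball c R) {z : ℂ} (hz : z ∈ closedBall c R) :
    (R : ℂ) ^ 2 - conj (w - c) * (z - c) ≠ 0 := by
  intro h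
  have hR := pos_of_mem_ball hw
  rw [mem_ball_iff_norm] at hw
  rw [mem_closedBall_iff_norm] at hz
  have hnorm := congrArg norm (sub_eq_zero.1 h)
  rw [norm_pow, norm_mul, norm_conj, norm_real, Real.norm_of_nonneg hR.le] at hnorm
  nlinarith [norm_nonneg (w - c)]

lemma conj_div_sub_pow_of_mem_sphere (hw : w ∈ ball c R) {z : ℂ} (hz : z ∈ sphere c R) (k : ℕ) :
    conj ((z - c) / (z - w) ^ (k + 2)) =
      R ^ 2 * (z - c) ^ (k + 1) / (R ^ 2 - conj (w - c) * (z - c)) ^ (k + 2) := by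
  have hzc := sub_ne_zero_of_mem_ball_of_mem_sphere (mem_ball_self (pos_of_mem_ball hw)) hz
  have hconj : conj (z - c) = R ^ 2 / (z - c) := by
    rw [eq_div_iff hzc, ← normSq_eq_conj_mul_self, normSq_eq_norm_sq, mem_sphere_iff_norm.1 hz]
    norm_cast
  have hconj' : conj (z - w) = (R ^ 2 - conj (w - c) * (z - c)) / (z - c) := by
    rw [← sub_sub_sub_cancel_right z w c, map_sub, hconj, sub_div, mul_div_cancel_right₀ _ hzc]
  rw [map_div₀, map_pow, hconj', hconj, div_pow]
  field_simp
  ring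

-- On the circle the conjugate of the kernel is holomorphic and vanishes at the centre.
lemma circleAverage_div_sub_pow_mul_conj (hf : AnalyticOnNhd ℂ f (closedBall c R))
    (hw : w ∈ ball c R) (k : ℕ) :
    circleAverage (fun z ↦ (z - c) / (z - w) ^ (k + 2) * conj (f z)) c R = 0 := by
  have hR := pos_of_mem_ball hw
  set g : ℂ → ℂ := fun z ↦
    R ^ 2 * (z - c) ^ (k + 1) / (R ^ 2 - conj (w - c) * (z - c)) ^ (k + 2) * f z
  have hg : DiffContOnCl ℂ g (ball c |R|) := by
    rw [abs_of_pos hR]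
    refine (DifferentiableOn.mono ?_ closure_ball_subset_closedBall).diffContOnCl
    refine (DifferentiableOn.div (by fun_prop) (by fun_prop) fun z hz ↦ ?_).mul
      hf.differentiableOn
    exact pow_ne_zero _ (sq_sub_conj_mul_sub_ne_zero hw hz)
  have hgint : CircleIntegrable g c R := by
    refine (hg.continuousOn.mono ?_).circleIntegrable hR.le
    rw [abs_of_pos hR, closure_ball c hR.ne']
    exact sphere_subset_closedBall
  have hgc : g c = 0 := by simp [g]
  have hconj := (conjCLE : ℂ →L[ℝ] ℂ).circleAverage_comp_comm hgint
  rw [hg.circleAverage, hgc, map_zero] at hconj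
  rw [← hconj]
  refine circleAverage_congr_sphere fun z hz ↦ ?_
  rw [abs_of_pos hR] at hz
  simp only [Function.comp_apply, g, ← conj_div_sub_pow_of_mem_sphere hw hz k]
  simp

lemma exists_analyticOnNhd_ball_exp_eq {r : ℝ} (hf : AnalyticOnNhd ℂ f (ball c r))
    (h0 : ∀ z ∈ ball c r, f z ≠ 0) :
    ∃ L : ℂ → ℂ, AnalyticOnNhd ℂ L (ball c r) ∧ ∀ z ∈ ball c r, cexp (L z) = f z := by
  rcases le_or_gt r 0 with hr | hr
  · simp [ball_eq_empty.2 hr, AnalyticOnNhd]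
  have hcball := mem_ball_self (x := c) hr
  have hlogDeriv : DifferentiableOn ℂ (logDeriv f) (ball c r) :=
    hf.deriv.differentiableOn.div hf.differentiableOn h0
  obtain ⟨L, hLc, hL⟩ := hlogDeriv.isExactOn_ball.with_val_at c (Complex.log (f c))
  have hquot : ∀ z ∈ ball c r, HasDerivAt (fun z ↦ f z * cexp (-L z)) 0 z := fun z hz ↦ by
    refine ((hf z hz).differentiableAt.hasDerivAt.mul (hL z hz).neg.cexp).congr_deriv ?_
    have := h0 z hz
    rw [logDeriv_apply, Pi.neg_apply]
    field_simp
    ring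
  refine ⟨L, DifferentiableOn.analyticOnNhd (fun z hz ↦
    (hL z hz).differentiableAt.differentiableWithinAt) isOpen_ball, fun z hz ↦ ?_⟩
  have hconst := isOpen_ball.is_const_of_deriv_eq_zero (convex_ball c r).isPreconnected
    (fun z hz ↦ (hquot z hz).differentiableAt.differentiableWithinAt)
    (fun z hz ↦ (hquot z hz).deriv) hz hcball
  rw [hLc, Complex.exp_neg, Complex.exp_neg, Complex.exp_log (h0 c hcball),
    mul_inv_cancel₀ (h0 c hcball)] at hconst
  exact (eq_of_mul_inv_eq_one hconst).symm

lemma exists_analyticOnNhd_closedBall_exp_eq (hR : 0 ≤ R)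
    (hf : AnalyticOnNhd ℂ f (closedBall c R)) (h0 : ∀ z ∈ closedBall c R, f z ≠ 0) :
    ∃ L : ℂ → ℂ, AnalyticOnNhd ℂ L (closedBall c R) ∧
      ∀ z ∈ closedBall c R, cexp (L z) = f z := by
  have hopen : IsOpen {z | AnalyticAt ℂ f z ∧ f z ≠ 0} := by
    rw [isOpen_iff_mem_nhds]
    rintro z ⟨hz, hz0⟩
    exact hz.eventually_analyticAt.and (hz.continuousAt.eventually_ne hz0)
  obtain ⟨δ, hδ, hsub⟩ := (isCompact_closedBall c R).exists_thickening_subset_open hopen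
    fun z hz ↦ ⟨hf z hz, h0 z hz⟩
  rw [thickening_closedBall hδ hR] at hsub
  obtain ⟨L, hL, hexp⟩ := exists_analyticOnNhd_ball_exp_eq (fun z hz ↦ (hsub hz).1)
    fun z hz ↦ (hsub hz).2
  have hball : closedBall c R ⊆ ball c (δ + R) := closedBall_subset_ball (by linarith)
  exact ⟨L, hL.mono hball, fun z hz ↦ hexp z (hball hz)⟩

lemma logDeriv_eventuallyEq_deriv_of_exp {L : ℂ → ℂ} (hL : AnalyticAt ℂ L w)
    (hexp : ∀ᶠ z in 𝓝 w, cexp (L z) = f z) : logDeriv f =ᶠ[𝓝 w] deriv L := by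
  filter_upwards [hexp.eventually_nhds, hL.eventually_analyticAt] with z hz hLz
  have heq : f =ᶠ[𝓝 z] fun z ↦ cexp (L z) := by filter_upwards [hz] with y hy using hy.symm
  rw [(logDeriv_congr_nhds heq).eq_of_nhds, logDeriv_apply,
    hLz.differentiableAt.hasDerivAt.cexp.deriv, mul_div_cancel_left₀ _ (Complex.exp_ne_zero _)]

lemma circleAverage_div_sub_pow_mul_log_norm (hf : AnalyticOnNhd ℂ f (closedBall c R))
    (h0 : ∀ z ∈ closedBall c R, f z ≠ 0) (hw : w ∈ ball c R) (k : ℕ) :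
    circleAverage (fun z ↦ 2 * ((z - c) / (z - w) ^ (k + 2)) * Real.log ‖f z‖) c R =
      iteratedDeriv k (logDeriv f) w / (k + 1) ! := by
  have hR := pos_of_mem_ball hw
  obtain ⟨L, hL, hexp⟩ := exists_analyticOnNhd_closedBall_exp_eq hR.le hf h0
  have hLc : ContinuousOn L (sphere c R) := hL.continuousOn.mono sphere_subset_closedBall
  have hLc' : ContinuousOn (fun z ↦ conj (L z)) (sphere c R) := hLc.star
  have hlogDeriv : logDeriv f =ᶠ[𝓝 w] deriv L := by
    refine logDeriv_eventuallyEq_deriv_of_exp (hL w (ball_subset_closedBall hw)) ?_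
    filter_upwards [isOpen_ball.mem_nhds hw] with z hz using hexp z (ball_subset_closedBall hz)
  have hsplit : circleAverage (fun z ↦ 2 * ((z - c) / (z - w) ^ (k + 2)) * Real.log ‖f z‖) c R =
      circleAverage (fun z ↦ (z - c) / (z - w) ^ (k + 1 + 1) * L z +
        (z - c) / (z - w) ^ (k + 2) * conj (L z)) c R := by
    refine circleAverage_congr_sphere fun z hz ↦ ?_
    rw [abs_of_pos hR] at hz
    rw [← hexp z (sphere_subset_closedBall hz), norm_exp, Real.log_exp, ← mul_add, add_conj]
    push_cast
    ring
  have hint {g : ℂ → ℂ} (hg : ContinuousOn g (sphere c R)) :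
      CircleIntegrable (fun z ↦ (z - c) / (z - w) ^ (k + 2) * g z) c R := by
    simp_rw [div_mul_eq_mul_div]
    exact circleIntegrable_div_sub_pow hw (by fun_prop) _
  rw [hsplit, circleAverage_fun_add (hint hLc) (hint hLc'),
    circleAverage_div_sub_pow_mul_conj hL hw, add_zero, circleAverage_div_sub_pow_mul hL hw,
    iteratedDeriv_succ', hlogDeriv.iteratedDeriv_eq]

end CauchyKernels

section BinomialFunctional

open Metric Real
open scoped Nat Topology

variable {c : ℂ} {R : ℝ} {f g : ℂ → ℂ} {u v : ℂ → ℝ}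

/-- The binomial combination `∑ l ∈ [1, n], C(n, l) f^{(l - 1)}(0) / (l - 1)!` of the Taylor
coefficients of `f` at the origin, indexed by `k = l - 1`. -/
noncomputable def liSum (n : ℕ) (f : ℂ → ℂ) : ℂ :=
  ∑ k ∈ range n, (n.choose (k + 1) : ℂ) * (iteratedDeriv k f 0 / k !)

lemma sum_Icc_one_choose_mul (n : ℕ) (a : ℕ → ℂ) :
    ∑ l ∈ Icc 1 n, (n.choose l : ℂ) * a (l - 1) =
      ∑ k ∈ range n, (n.choose (k + 1) : ℂ) * a k := by
  rw [range_eq_Ico]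
  exact (sum_Ico_add' (fun l ↦ (n.choose l : ℂ) * a (l - 1)) 0 n 1).symm

lemma liSum_congr (h : f =ᶠ[𝓝 0] g) (n : ℕ) : liSum n f = liSum n g := by
  simp only [liSum, h.iteratedDeriv_eq]

lemma liSum_add (hf : AnalyticAt ℂ f 0) (hg : AnalyticAt ℂ g 0) (n : ℕ) :
    liSum n (f + g) = liSum n f + liSum n g := by
  simp only [liSum, iteratedDeriv_add hf.contDiffAt hg.contDiffAt, add_div, mul_add,
    sum_add_distrib]

lemma liSum_neg (n : ℕ) (f : ℂ → ℂ) : liSum n (-f) = -liSum n f := by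
  simp only [liSum, iteratedDeriv_neg, neg_div, mul_neg, sum_neg_distrib]

lemma liSum_inv_sub {a : ℂ} (ha : a ≠ 0) (n : ℕ) :
    liSum n (fun z ↦ (z - a)⁻¹) = 1 - (1 + 1 / a) ^ n := by
  have hderiv (k : ℕ) : iteratedDeriv k (fun z ↦ (z - a)⁻¹) 0 / k ! = -(1 / a) ^ (k + 1) := by
    have hk : (k ! : ℂ) ≠ 0 := mod_cast k.factorial_ne_zero
    rw [iteratedDeriv_comp_sub_const, iteratedDeriv_eq_iterate]
    simp only [iter_deriv_inv, zero_sub]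
    rw [show (-1 - k : ℤ) = -((k + 1 : ℕ) : ℤ) by lia, zpow_neg, zpow_natCast, neg_pow a,
      div_pow, one_pow]
    field_simp
    ring
  rw [add_comm 1, add_pow, sum_range_succ']
  simp [liSum, hderiv, mul_comm]

lemma logDeriv_sub_const (a : ℂ) : logDeriv (fun z ↦ z - a) = fun z ↦ (z - a)⁻¹ := by
  ext z
  simp [logDeriv_apply]

/-- The weight on the circle with centre `c` against which `log ‖f‖` averages to
`liSum n (logDeriv f)` when `f` has no zeros inside. -/
noncomputable def liWeight (c : ℂ) (n : ℕ) (z : ℂ) : ℂ :=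
  2 * ((z - c) * (n / z ^ 2 * (1 + 1 / z) ^ (n - 1)))

lemma liWeight_eq_sum {z : ℂ} (hz : z ≠ 0) (n : ℕ) :
    liWeight c n z =
      ∑ k ∈ range n, (n.choose (k + 1) * (k + 1) : ℂ) * (2 * ((z - c) / (z - 0) ^ (k + 2))) := by
  rcases n with _ | n
  · simp [liWeight]
  rw [liWeight, add_tsub_cancel_right, add_comm 1, add_pow]
  simp only [mul_sum]
  refine sum_congr rfl fun k _ ↦ ?_
  have hchoose : (n + 1 : ℂ) * n.choose k = (n + 1).choose (k + 1) * (k + 1) :=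
    mod_cast Nat.add_one_mul_choose_eq n k
  rw [← hchoose]
  push_cast
  simp only [one_pow, mul_one, one_div, inv_pow, sub_zero]
  field_simp
  ring

/-- The average of `u` over the circle with centre `c` and radius `R`, weighted by `liWeight`. -/
noncomputable def liBoundary (c : ℂ) (R : ℝ) (n : ℕ) (u : ℂ → ℝ) : ℂ :=
  circleAverage (fun z ↦ liWeight c n z * u z) c R

lemma ne_zero_of_mem_sphere_of_zero_mem_ball (h0 : 0 ∈ ball c R) {z : ℂ} (hz : z ∈ sphere c R) :
    z ≠ 0 := by
  simpa using sub_ne_zero_of_mem_ball_of_mem_sphere h0 hz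

lemma continuousOn_liWeight_sphere (h0 : 0 ∈ ball c R) (n : ℕ) :
    ContinuousOn (liWeight c n) (sphere c R) := by
  have hz (z) (hz : z ∈ sphere c R) : z ≠ 0 := ne_zero_of_mem_sphere_of_zero_mem_ball h0 hz
  unfold liWeight
  fun_prop (disch := simpa using hz)

lemma circleIntegrable_liWeight_mul (h0 : 0 ∈ ball c R) (hu : ContinuousOn u (sphere c R))
    (n : ℕ) : CircleIntegrable (fun z ↦ liWeight c n z * u z) c R :=
  ((continuousOn_liWeight_sphere h0 n).mul
    (continuous_ofReal.comp_continuousOn hu)).circleIntegrable (pos_of_mem_ball h0).le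

lemma liBoundary_congr (h : ∀ z ∈ sphere c |R|, u z = v z) (n : ℕ) :
    liBoundary c R n u = liBoundary c R n v :=
  circleAverage_congr_sphere fun z hz ↦ by simp only [h z hz]

lemma liBoundary_add (h0 : 0 ∈ ball c R) (hu : ContinuousOn u (sphere c R))
    (hv : ContinuousOn v (sphere c R)) (n : ℕ) :
    liBoundary c R n (fun z ↦ u z + v z) = liBoundary c R n u + liBoundary c R n v := by
  simp only [liBoundary, ofReal_add, mul_add]
  exact circleAverage_fun_add (circleIntegrable_liWeight_mul h0 hu n)
    (circleIntegrable_liWeight_mul h0 hv n)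

lemma liBoundary_log_norm_eq_liSum_logDeriv (h0 : 0 ∈ ball c R)
    (hf : AnalyticOnNhd ℂ f (closedBall c R)) (hf0 : ∀ z ∈ closedBall c R, f z ≠ 0) (n : ℕ) :
    liBoundary c R n (fun z ↦ Real.log ‖f z‖) = liSum n (logDeriv f) := by
  have hR := pos_of_mem_ball h0
  have hlog : ContinuousOn (fun z ↦ (Real.log ‖f z‖ : ℂ)) (sphere c R) :=
    continuous_ofReal.comp_continuousOn <| (hf.continuousOn.mono sphere_subset_closedBall).norm.log
      fun z hz ↦ norm_ne_zero_iff.2 (hf0 z (sphere_subset_closedBall hz))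
  have hint (k : ℕ) : CircleIntegrable
      (fun z ↦ 2 * ((z - c) / (z - 0) ^ (k + 2)) * (Real.log ‖f z‖ : ℂ)) c R := by
    refine (circleIntegrable_div_sub_pow h0 (f := fun z ↦ 2 * (z - c) * (Real.log ‖f z‖ : ℂ))
      (by fun_prop) (k + 2)).congr fun z _ ↦ ?_
    ring
  have hsum : liBoundary c R n (fun z ↦ Real.log ‖f z‖) = circleAverage (fun z ↦
      ∑ k ∈ range n, (n.choose (k + 1) * (k + 1) : ℂ) •
        (2 * ((z - c) / (z - 0) ^ (k + 2)) * (Real.log ‖f z‖ : ℂ))) c R := by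
    refine circleAverage_congr_sphere fun z hz ↦ ?_
    rw [abs_of_pos hR] at hz
    simp only [liWeight_eq_sum (ne_zero_of_mem_sphere_of_zero_mem_ball h0 hz), sum_mul, smul_eq_mul,
      mul_assoc]
  rw [hsum, circleAverage_fun_sum fun k _ ↦ (hint k).const_fun_smul, liSum]
  refine sum_congr rfl fun k _ ↦ ?_
  rw [circleAverage_fun_smul, circleAverage_div_sub_pow_mul_log_norm hf hf0 h0, Nat.factorial_succ]
  push_cast
  simp only [smul_eq_mul]
  field_simp

lemma norm_sub_eq_mul_norm_sub_inversion {z ρ : ℂ} (hz : z ∈ sphere c R) (hR : R ≠ 0)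
    (hρ : ρ ≠ c) :
    ‖z - ρ‖ = dist ρ c / R * ‖z - EuclideanGeometry.inversion c R ρ‖ := by
  have hzc : z ≠ c := ne_of_mem_sphere hz hR
  have hd : dist ρ c ≠ 0 := dist_ne_zero.2 hρ
  have h := EuclideanGeometry.dist_inversion_inversion hzc hρ R
  rw [EuclideanGeometry.inversion_of_mem_sphere hz, mem_sphere.1 hz] at h
  rw [← dist_eq_norm, ← dist_eq_norm, h]
  field_simp

lemma inversion_notMem_closedBall {ρ : ℂ} (hρ : ρ ∈ ball c R) (hρc : ρ ≠ c) :
    EuclideanGeometry.inversion c R ρ ∉ closedBall c R := by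
  have hd : 0 < dist ρ c := dist_pos.2 hρc
  rw [mem_closedBall, EuclideanGeometry.dist_inversion_center, not_le, lt_div_iff₀ hd, sq]
  exact mul_lt_mul_of_pos_left hρ (pos_of_mem_ball hρ)

lemma liBoundary_log_norm_sub (h0 : 0 ∈ ball c R) {ρ : ℂ} (hρ : ρ ∈ ball c R) (hρc : ρ ≠ c)
    (n : ℕ) :
    liBoundary c R n (fun z ↦ Real.log ‖z - ρ‖) =
      1 - (1 + 1 / EuclideanGeometry.inversion c R ρ) ^ n := by
  have hR := pos_of_mem_ball h0
  set b := EuclideanGeometry.inversion c R ρ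
  have hb_mem : b ∉ closedBall c R := inversion_notMem_closedBall hρ hρc
  have hb : ∀ z ∈ closedBall c R, z - b ≠ 0 := fun z hz h ↦ hb_mem (sub_eq_zero.1 h ▸ hz)
  have hk : ((dist ρ c / R : ℝ) : ℂ) ≠ 0 :=
    ofReal_ne_zero.2 (div_ne_zero (dist_ne_zero.2 hρc) hR.ne')
  have hreflect : liBoundary c R n (fun z ↦ Real.log ‖z - ρ‖) =
      liBoundary c R n (fun z ↦ Real.log ‖((dist ρ c / R : ℝ) : ℂ) * (z - b)‖) := by
    refine liBoundary_congr (fun z hz ↦ ?_) n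
    rw [abs_of_pos hR] at hz
    rw [norm_sub_eq_mul_norm_sub_inversion hz hR.ne' hρc, norm_mul,
      norm_real, Real.norm_of_nonneg (div_nonneg dist_nonneg hR.le)]
  have hlogDeriv : logDeriv (fun z ↦ ((dist ρ c / R : ℝ) : ℂ) * (z - b)) = fun z ↦ (z - b)⁻¹ := by
    ext z
    rw [logDeriv_const_mul z _ hk, logDeriv_sub_const]
  rw [hreflect, liBoundary_log_norm_eq_liSum_logDeriv h0 (fun z _ ↦ by fun_prop)
    (fun z hz ↦ mul_ne_zero hk (hb z hz)), hlogDeriv, liSum_inv_sub]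
  simpa using hb 0 (ball_subset_closedBall h0)

end BinomialFunctional

section JensenGap

open Metric Real
open scoped Topology

variable {c : ℂ} {R A : ℝ} {n : ℕ} {f g : ℂ → ℂ}

/-- The excess of the average of `log ‖f‖` over a circle above its value at the centre. By Jensen's
formula it is the sum of `log (R / ‖ρ - c‖)` over the zeros `ρ` inside. -/
noncomputable def jensenGap (c : ℂ) (R : ℝ) (f : ℂ → ℂ) : ℝ :=
  circleAverage (fun z ↦ Real.log ‖f z‖) c R - Real.log ‖f c‖

/-- The contribution of the zeros of `f` inside the circle to `liSum n (logDeriv f)`. -/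
noncomputable def liDefect (c : ℂ) (R : ℝ) (n : ℕ) (f : ℂ → ℂ) : ℂ :=
  liSum n (logDeriv f) - liBoundary c R n (fun z ↦ Real.log ‖f z‖)

/-- The functions for which both `jensenGap` and `liDefect` count the zeros inside the circle: no
zero lies on the circle, at its centre, or at the origin. -/
structure IsJensenAdmissible (c : ℂ) (R : ℝ) (f : ℂ → ℂ) : Prop where
  analyticOnNhd : AnalyticOnNhd ℂ f (closedBall c R)
  ne_zero_origin : f 0 ≠ 0
  ne_zero_center : f c ≠ 0
  ne_zero_of_mem_sphere : ∀ z ∈ sphere c R, f z ≠ 0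

lemma IsJensenAdmissible.continuousOn_log_norm (hf : IsJensenAdmissible c R f) :
    ContinuousOn (fun z ↦ Real.log ‖f z‖) (sphere c R) :=
  (hf.analyticOnNhd.continuousOn.mono sphere_subset_closedBall).norm.log
    fun z hz ↦ norm_ne_zero_iff.2 (hf.ne_zero_of_mem_sphere z hz)

lemma IsJensenAdmissible.mul (hf : IsJensenAdmissible c R f) (hg : IsJensenAdmissible c R g) :
    IsJensenAdmissible c R (f * g) where
  analyticOnNhd := hf.analyticOnNhd.mul hg.analyticOnNhd
  ne_zero_origin := mul_ne_zero hf.ne_zero_origin hg.ne_zero_origin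
  ne_zero_center := mul_ne_zero hf.ne_zero_center hg.ne_zero_center
  ne_zero_of_mem_sphere z hz :=
    mul_ne_zero (hf.ne_zero_of_mem_sphere z hz) (hg.ne_zero_of_mem_sphere z hz)

lemma IsJensenAdmissible.log_norm_mul (hf : IsJensenAdmissible c R f)
    (hg : IsJensenAdmissible c R g) {z : ℂ} (hz : z ∈ sphere c R) :
    Real.log ‖(f * g) z‖ = Real.log ‖f z‖ + Real.log ‖g z‖ := by
  rw [Pi.mul_apply, norm_mul, Real.log_mul (norm_ne_zero_iff.2 (hf.ne_zero_of_mem_sphere z hz))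
    (norm_ne_zero_iff.2 (hg.ne_zero_of_mem_sphere z hz))]

lemma jensenGap_mul (hR : 0 ≤ R) (hf : IsJensenAdmissible c R f)
    (hg : IsJensenAdmissible c R g) :
    jensenGap c R (f * g) = jensenGap c R f + jensenGap c R g := by
  have havg : circleAverage (fun z ↦ Real.log ‖(f * g) z‖) c R =
      circleAverage (fun z ↦ Real.log ‖f z‖ + Real.log ‖g z‖) c R :=
    circleAverage_congr_sphere fun z hz ↦ hf.log_norm_mul hg (abs_of_nonneg hR ▸ hz)
  rw [jensenGap, havg, circleAverage_fun_add (hf.continuousOn_log_norm.circleIntegrable hR)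
    (hg.continuousOn_log_norm.circleIntegrable hR), Pi.mul_apply, norm_mul,
    Real.log_mul (norm_ne_zero_iff.2 hf.ne_zero_center) (norm_ne_zero_iff.2 hg.ne_zero_center),
    jensenGap, jensenGap]
  ring

lemma analyticAt_logDeriv {w : ℂ} (hf : AnalyticAt ℂ f w) (hw : f w ≠ 0) :
    AnalyticAt ℂ (logDeriv f) w :=
  hf.deriv.div hf hw

lemma liDefect_mul (h0 : 0 ∈ ball c R) (hf : IsJensenAdmissible c R f)
    (hg : IsJensenAdmissible c R g) (n : ℕ) :
    liDefect c R n (f * g) = liDefect c R n f + liDefect c R n g := by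
  have hf0 := hf.analyticOnNhd 0 (ball_subset_closedBall h0)
  have hg0 := hg.analyticOnNhd 0 (ball_subset_closedBall h0)
  have hlogDeriv : logDeriv (f * g) =ᶠ[𝓝 0] logDeriv f + logDeriv g := by
    filter_upwards [hf0.eventually_analyticAt, hg0.eventually_analyticAt,
      hf0.continuousAt.eventually_ne hf.ne_zero_origin,
      hg0.continuousAt.eventually_ne hg.ne_zero_origin] with z hfz hgz hfz0 hgz0
    exact logDeriv_mul z hfz0 hgz0 hfz.differentiableAt hgz.differentiableAt
  have hboundary : liBoundary c R n (fun z ↦ Real.log ‖(f * g) z‖) =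
      liBoundary c R n (fun z ↦ Real.log ‖f z‖ + Real.log ‖g z‖) :=
    liBoundary_congr (fun z hz ↦
      hf.log_norm_mul hg (abs_of_pos (pos_of_mem_ball h0) ▸ hz)) n
  rw [liDefect, hboundary, liSum_congr hlogDeriv,
    liSum_add (analyticAt_logDeriv hf0 hf.ne_zero_origin)
      (analyticAt_logDeriv hg0 hg.ne_zero_origin),
    liBoundary_add h0 hf.continuousOn_log_norm hg.continuousOn_log_norm, liDefect, liDefect]
  ring

lemma jensenGap_eq_zero (hR : 0 ≤ R) (hf : AnalyticOnNhd ℂ f (closedBall c R))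
    (hf0 : ∀ z ∈ closedBall c R, f z ≠ 0) : jensenGap c R f = 0 := by
  rw [← abs_of_nonneg hR] at hf hf0
  exact sub_eq_zero.2 (hf.circleAverage_log_norm_of_ne_zero hf0)

lemma liDefect_eq_zero (h0 : 0 ∈ ball c R) (hf : AnalyticOnNhd ℂ f (closedBall c R))
    (hf0 : ∀ z ∈ closedBall c R, f z ≠ 0) (n : ℕ) : liDefect c R n f = 0 :=
  sub_eq_zero.2 (liBoundary_log_norm_eq_liSum_logDeriv h0 hf hf0 n).symm

lemma isJensenAdmissible_of_ne_zero (h0 : 0 ∈ ball c R) (hf : AnalyticOnNhd ℂ f (closedBall c R))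
    (hf0 : ∀ z ∈ closedBall c R, f z ≠ 0) : IsJensenAdmissible c R f where
  analyticOnNhd := hf
  ne_zero_origin := hf0 0 (ball_subset_closedBall h0)
  ne_zero_center := hf0 c (mem_closedBall_self (pos_of_mem_ball h0).le)
  ne_zero_of_mem_sphere z hz := hf0 z (sphere_subset_closedBall hz)

/-- The admissible functions whose defect is at most `A` times their Jensen gap, as a multiplicative
monoid: both quantities turn products into sums. -/
def gapDominated (h0 : 0 ∈ ball c R) (n : ℕ) (A : ℝ) : Submonoid (ℂ → ℂ) where
  carrier := {f | IsJensenAdmissible c R f ∧ ‖liDefect c R n f‖ ≤ A * jensenGap c R f}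
  one_mem' := by
    have h1 (z : ℂ) (_ : z ∈ closedBall c R) : (1 : ℂ → ℂ) z ≠ 0 := one_ne_zero
    have hana : AnalyticOnNhd ℂ (1 : ℂ → ℂ) (closedBall c R) := analyticOnNhd_const
    refine ⟨isJensenAdmissible_of_ne_zero h0 hana h1, ?_⟩
    rw [liDefect_eq_zero h0 hana h1, jensenGap_eq_zero (pos_of_mem_ball h0).le hana h1]
    simp
  mul_mem' := by
    rintro f g ⟨hf, hfA⟩ ⟨hg, hgA⟩
    refine ⟨hf.mul hg, ?_⟩
    rw [liDefect_mul h0 hf hg, jensenGap_mul (pos_of_mem_ball h0).le hf hg, mul_add]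
    exact (norm_add_le _ _).trans (add_le_add hfA hgA)

lemma mem_gapDominated_of_ne_zero (h0 : 0 ∈ ball c R) (hf : AnalyticOnNhd ℂ f (closedBall c R))
    (hf0 : ∀ z ∈ closedBall c R, f z ≠ 0) : f ∈ gapDominated h0 n A := by
  refine ⟨isJensenAdmissible_of_ne_zero h0 hf hf0, ?_⟩
  rw [liDefect_eq_zero h0 hf hf0, jensenGap_eq_zero (pos_of_mem_ball h0).le hf hf0]
  simp

lemma exists_eq_sub_pow_mul_of_analyticOnNhd {U : Set ℂ} {ρ : ℂ} (hf : AnalyticOnNhd ℂ f U)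
    (hρ : AnalyticAt ℂ f ρ) (hne : ¬∀ᶠ z in 𝓝 ρ, f z = 0) :
    ∃ (m : ℕ) (g : ℂ → ℂ), AnalyticOnNhd ℂ g U ∧ g ρ ≠ 0 ∧ f = (fun z ↦ z - ρ) ^ m * g := by
  obtain ⟨m, h, hh, hhρ, hfh⟩ := hρ.exists_eventuallyEq_pow_smul_nonzero_iff.2 hne
  have hsub {z : ℂ} (hz : z ≠ ρ) : (z - ρ) ^ m ≠ 0 := pow_ne_zero m (sub_ne_zero.2 hz)
  set g : ℂ → ℂ := Function.update (fun z ↦ f z / (z - ρ) ^ m) ρ (h ρ) with hg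
  have hg_of_ne {z : ℂ} (hz : z ≠ ρ) : g z = f z / (z - ρ) ^ m := Function.update_of_ne hz _ _
  have hgρ : g ρ = h ρ := Function.update_self _ _ _
  refine ⟨m, g, fun z hz ↦ ?_, hgρ ▸ hhρ, funext fun z ↦ ?_⟩
  · rcases eq_or_ne z ρ with rfl | hzρ
    · refine hh.congr ?_
      filter_upwards [hfh] with y hy
      rcases eq_or_ne y z with rfl | hyz
      · exact hgρ.symm
      · rw [hg_of_ne hyz, hy, smul_eq_mul, mul_div_cancel_left₀ _ (hsub hyz)]
    · have hquot : AnalyticAt ℂ (fun z ↦ f z / (z - ρ) ^ m) z :=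
        (hf z hz).div (by fun_prop) (hsub hzρ)
      refine hquot.congr ?_
      filter_upwards [isOpen_ne.mem_nhds hzρ] with y hy using (hg_of_ne hy).symm
  · rcases eq_or_ne z ρ with rfl | hzρ
    · simpa [hgρ] using hfh.self_of_nhds
    · simp [hg_of_ne hzρ, mul_div_cancel₀ _ (hsub hzρ)]

lemma mem_gapDominated_of_sub_mem (h0 : 0 ∈ ball c R) (S : Finset ℂ)
    (hS : ∀ ρ ∈ S, ρ ∈ closedBall c R ∧ (fun z ↦ z - ρ) ∈ gapDominated h0 n A)
    (hf : AnalyticOnNhd ℂ f (closedBall c R)) (hfc : f c ≠ 0)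
    (hzero : ∀ z ∈ closedBall c R, f z = 0 → z ∈ S) : f ∈ gapDominated h0 n A := by
  classical
  have hc : c ∈ closedBall c R := mem_closedBall_self (pos_of_mem_ball h0).le
  induction S using Finset.induction_on generalizing f with
  | empty => exact mem_gapDominated_of_ne_zero h0 hf fun z hz h ↦ notMem_empty z (hzero z hz h)
  | insert ρ S _ ih =>
    obtain ⟨hρ, hρmem⟩ := hS ρ (mem_insert_self ρ S)
    have hne : ¬∀ᶠ z in 𝓝 ρ, f z = 0 := fun h ↦ hfc <|
      hf.eqOn_zero_of_preconnected_of_eventuallyEq_zero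
        (convex_closedBall c R).isPreconnected hρ h hc
    obtain ⟨m, g, hg, hgρ, rfl⟩ := exists_eq_sub_pow_mul_of_analyticOnNhd hf (hf ρ hρ) hne
    refine mul_mem (pow_mem hρmem m) (ih (fun r hr ↦ hS r (mem_insert_of_mem hr)) hg
      (right_ne_zero_of_mul hfc) fun z hz hgz ↦ ?_)
    have hzS : z ∈ insert ρ S := hzero z hz (mul_eq_zero_of_right _ hgz)
    exact mem_of_mem_insert_of_ne hzS (by rintro rfl; exact hgρ hgz)

lemma isJensenAdmissible_sub_const {ρ : ℂ} (hρ : ρ ∈ ball c R) (hρc : ρ ≠ c) (hρ0 : ρ ≠ 0) :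
    IsJensenAdmissible c R (fun z ↦ z - ρ) where
  analyticOnNhd _ _ := by fun_prop
  ne_zero_origin := by simpa using hρ0
  ne_zero_center := sub_ne_zero.2 hρc.symm
  ne_zero_of_mem_sphere _ hz := sub_ne_zero_of_mem_ball_of_mem_sphere hρ hz

lemma jensenGap_sub_const {ρ : ℂ} (hρ : ρ ∈ ball c R) :
    jensenGap c R (fun z ↦ z - ρ) = Real.log R - Real.log (dist ρ c) := by
  have hmem : ρ ∈ closedBall c |R| :=
    ball_subset_closedBall (by rwa [abs_of_pos (pos_of_mem_ball hρ)])
  rw [jensenGap, circleAverage_log_norm_sub_const_of_mem_closedBall hmem, dist_comm, dist_eq_norm]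

lemma liDefect_sub_const (h0 : 0 ∈ ball c R) {ρ : ℂ} (hρ : ρ ∈ ball c R) (hρc : ρ ≠ c)
    (hρ0 : ρ ≠ 0) (n : ℕ) :
    liDefect c R n (fun z ↦ z - ρ) =
      (1 + 1 / EuclideanGeometry.inversion c R ρ) ^ n - (1 + 1 / ρ) ^ n := by
  rw [liDefect, logDeriv_sub_const, liSum_inv_sub hρ0, liBoundary_log_norm_sub h0 hρ hρc]
  ring

end JensenGap

section CriticalZeros

open Metric EuclideanGeometry

variable {c ρ : ℂ} {R : ℝ} {n : ℕ}

lemma norm_pow_sub_pow_le {a b : ℂ} (ha : ‖a‖ ≤ 1) (hb : ‖b‖ ≤ 1) (n : ℕ) :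
    ‖a ^ n - b ^ n‖ ≤ n * ‖a - b‖ := by
  induction n with
  | zero => simp
  | succ n ih =>
    calc ‖a ^ (n + 1) - b ^ (n + 1)‖ = ‖a * (a ^ n - b ^ n) + (a - b) * b ^ n‖ := by ring_nf
      _ ≤ ‖a‖ * ‖a ^ n - b ^ n‖ + ‖a - b‖ * ‖b‖ ^ n := by
        simpa only [norm_mul, norm_pow] using norm_add_le (a * (a ^ n - b ^ n)) ((a - b) * b ^ n)
      _ ≤ 1 * (n * ‖a - b‖) + ‖a - b‖ * 1 := by
        gcongr
        exact pow_le_one₀ (norm_nonneg b) hb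
      _ = (n + 1 : ℕ) * ‖a - b‖ := by push_cast; ring

lemma norm_one_add_inv_le_one {s : ℂ} (hs : s.re ≤ -1 / 2) : ‖1 + 1 / s‖ ≤ 1 := by
  have hs0 : s ≠ 0 := by rintro rfl; norm_num at hs
  rw [one_add_div hs0, norm_div, div_le_one (norm_pos_iff.2 hs0),
    ← sq_le_sq₀ (norm_nonneg _) (norm_nonneg _)]
  simp only [Complex.sq_norm, normSq_apply, add_re, add_im, one_re, one_im]
  linarith

lemma inversion_eq_ofReal_mul (c ρ : ℂ) (R : ℝ) :
    inversion c R ρ = ((R / dist ρ c) ^ 2 : ℝ) * (ρ - c) + c := by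
  rw [inversion, vsub_eq_sub, vadd_eq_add, real_smul]

lemma abs_im_le_abs_im_inversion (hρ : ρ ∈ ball c R) (hρc : ρ ≠ c) (hc : c.im = 0) :
    |ρ.im| ≤ |(inversion c R ρ).im| := by
  rw [inversion_eq_ofReal_mul, add_im, im_ofReal_mul, sub_im, hc, sub_zero, add_zero, abs_mul,
    abs_of_nonneg (sq_nonneg (R / dist ρ c))]
  exact le_mul_of_one_le_left (abs_nonneg _)
    (one_le_pow₀ ((one_le_div (dist_pos.2 hρc)).2 (mem_ball.1 hρ).le))

lemma norm_sub_inversion (hρ : ρ ∈ ball c R) (hρc : ρ ≠ c) :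
    ‖ρ - inversion c R ρ‖ = (R ^ 2 - dist ρ c ^ 2) / dist ρ c := by
  have hd : 0 < dist ρ c := dist_pos.2 hρc
  have hone_le : 1 ≤ (R / dist ρ c) ^ 2 := one_le_pow₀ ((one_le_div hd).2 (mem_ball.1 hρ).le)
  have hsub : ρ - inversion c R ρ = ((1 - (R / dist ρ c) ^ 2 : ℝ) : ℂ) * (ρ - c) := by
    rw [inversion_eq_ofReal_mul]
    push_cast
    ring
  rw [hsub, norm_mul, norm_real, Real.norm_of_nonpos (by linarith), ← dist_eq_norm]
  field_simp
  ring

lemma sub_div_le_log_sub_log {d : ℝ} (hR : 0 < R) (hd : 0 < d) :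
    (R - d) / R ≤ Real.log R - Real.log d := by
  have h := Real.one_sub_inv_le_log_of_pos (div_pos hR hd)
  rwa [Real.log_div hR.ne' hd.ne', inv_div, one_sub_div hR.ne'] at h

lemma dist_natCast_sq_of_re_eq (hρ : ρ.re = -1 / 2) (n : ℕ) :
    dist ρ n ^ 2 = (n + 1 / 2) ^ 2 + ρ.im ^ 2 := by
  rw [dist_eq_norm, Complex.sq_norm, normSq_apply]
  simp [hρ]
  ring

lemma add_half_le_dist_natCast (hρ : ρ.re = -1 / 2) (n : ℕ) : n + 1 / 2 ≤ dist ρ n := by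
  refine abs_le_of_sq_le_sq' ?_ dist_nonneg |>.2
  rw [dist_natCast_sq_of_re_eq hρ]
  exact le_add_of_nonneg_right (sq_nonneg _)

lemma inversion_natCast_re_le (hρ : ρ.re = -1 / 2) (hρR : ρ ∈ ball (n : ℂ) R) (hρn : ρ ≠ n) :
    (inversion (n : ℂ) R ρ).re ≤ -1 / 2 := by
  have hone_le : 1 ≤ (R / dist ρ n) ^ 2 :=
    one_le_pow₀ ((one_le_div (dist_pos.2 hρn)).2 (mem_ball.1 hρR).le)
  rw [inversion_eq_ofReal_mul, add_re, re_ofReal_mul, sub_re, natCast_re, hρ]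
  nlinarith

lemma two_le_mul_sub_dist_div (hn : 2 ≤ n) (hR : R ∈ Set.Ioo (n + 7 / 10 : ℝ) (n + 4 / 5))
    (hρ : ρ.re = -1 / 2) (hρR : ρ ∈ ball (n : ℂ) R) (hlow : ρ.im ^ 2 < n / 5) :
    2 ≤ 40 * n * ((R - dist ρ n) / R) := by
  obtain ⟨hlo, hhi⟩ := hR
  have hn2 : (2 : ℝ) ≤ n := mod_cast hn
  have hdR : dist ρ n < R := hρR
  have hsq := dist_natCast_sq_of_re_eq hρ n
  have hgap : n / 10 ≤ (R - dist ρ n) * R := by nlinarith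
  rw [← mul_div_assoc, le_div_iff₀ (by linarith)]
  nlinarith

lemma five_mul_sq_sub_dist_sq_div_le (hn : 2 ≤ n)
    (hR : R ∈ Set.Ioo (n + 7 / 10 : ℝ) (n + 4 / 5)) (hρ : ρ.re = -1 / 2)
    (hρR : ρ ∈ ball (n : ℂ) R) :
    5 * ((R ^ 2 - dist ρ n ^ 2) / dist ρ n) ≤ 40 * n * ((R - dist ρ n) / R) := by
  obtain ⟨hlo, hhi⟩ := hR
  have hn2 : (2 : ℝ) ≤ n := mod_cast hn
  have hdn : n + 1 / 2 ≤ dist ρ n := add_half_le_dist_natCast hρ n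
  have hRd : 0 ≤ R - dist ρ n := sub_nonneg.2 (mem_ball.1 hρR).le
  have hratio : 5 * (R + dist ρ n) * R ≤ 40 * n * dist ρ n :=
    calc 5 * (R + dist ρ n) * R ≤ 5 * (3 * dist ρ n) * (1.4 * n) := by gcongr <;> linarith
      _ ≤ 40 * n * dist ρ n := by nlinarith
  rw [← mul_div_assoc, ← mul_div_assoc, div_le_div_iff₀ (by linarith) (by linarith)]
  calc 5 * (R ^ 2 - dist ρ n ^ 2) * R = (R - dist ρ n) * (5 * (R + dist ρ n) * R) := by ring
    _ ≤ (R - dist ρ n) * (40 * n * dist ρ n) := mul_le_mul_of_nonneg_left hratio hRd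
    _ = 40 * n * (R - dist ρ n) * dist ρ n := by ring

lemma norm_one_add_inv_pow_sub_le (hn : 0 < n) (hρ : ρ.re = -1 / 2)
    (hρR : ρ ∈ ball (n : ℂ) R) (hρn : ρ ≠ n) (hhigh : n / 5 ≤ ρ.im ^ 2) :
    ‖(1 + 1 / inversion (n : ℂ) R ρ) ^ n - (1 + 1 / ρ) ^ n‖ ≤
      5 * ((R ^ 2 - dist ρ n ^ 2) / dist ρ n) := by
  set b := inversion (n : ℂ) R ρ with hb
  have hbre : b.re ≤ -1 / 2 := inversion_natCast_re_le hρ hρR hρn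
  have hρ0 : ρ ≠ 0 := by rintro rfl; norm_num at hρ
  have hb0 : b ≠ 0 := by rintro h; norm_num [h] at hbre
  have hprod : n / 5 ≤ ‖ρ‖ * ‖b‖ :=
    calc n / 5 ≤ |ρ.im| * |ρ.im| := by rwa [abs_mul_abs_self, ← sq]
      _ ≤ |ρ.im| * |b.im| := mul_le_mul_of_nonneg_left
        (abs_im_le_abs_im_inversion hρR hρn (natCast_im n)) (abs_nonneg _)
      _ ≤ ‖ρ‖ * ‖b‖ := by gcongr <;> exact abs_im_le_norm _
  have hsub : 1 + 1 / b - (1 + 1 / ρ) = (ρ - b) / (ρ * b) := by field_simp; ring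
  calc ‖(1 + 1 / b) ^ n - (1 + 1 / ρ) ^ n‖
      ≤ n * ‖1 + 1 / b - (1 + 1 / ρ)‖ :=
        norm_pow_sub_pow_le (norm_one_add_inv_le_one hbre) (norm_one_add_inv_le_one hρ.le) n
    _ = n * (‖ρ - b‖ / (‖ρ‖ * ‖b‖)) := by rw [hsub, norm_div, norm_mul]
    _ ≤ n * (‖ρ - b‖ / (n / 5)) := by gcongr
    _ = 5 * ‖ρ - b‖ := by field_simp
    _ = 5 * ((R ^ 2 - dist ρ n ^ 2) / dist ρ n) := by rw [norm_sub_inversion hρR hρn]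

lemma norm_liDefect_sub_le (hn : 2 ≤ n) (hR : R ∈ Set.Ioo (n + 7 / 10 : ℝ) (n + 4 / 5))
    (h0 : 0 ∈ ball (n : ℂ) R) (hρ : ρ.re = -1 / 2) (hρR : ρ ∈ ball (n : ℂ) R) (hρn : ρ ≠ n) :
    ‖liDefect n R n (fun z ↦ z - ρ)‖ ≤ 40 * n * jensenGap n R (fun z ↦ z - ρ) := by
  have hρ0 : ρ ≠ 0 := by rintro rfl; norm_num at hρ
  rw [liDefect_sub_const h0 hρR hρn hρ0, jensenGap_sub_const hρR]
  suffices h : ‖(1 + 1 / inversion (n : ℂ) R ρ) ^ n - (1 + 1 / ρ) ^ n‖ ≤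
      40 * n * ((R - dist ρ n) / R) by
    refine h.trans ?_
    gcongr
    exact sub_div_le_log_sub_log (pos_of_mem_ball h0) (dist_pos.2 hρn)
  rcases lt_or_ge (ρ.im ^ 2) (n / 5 : ℝ) with hlow | hhigh
  · have hpow {s : ℂ} (hs : s.re ≤ -1 / 2) : ‖(1 + 1 / s) ^ n‖ ≤ 1 := by
      rw [norm_pow]
      exact pow_le_one₀ (norm_nonneg _) (norm_one_add_inv_le_one hs)
    calc ‖(1 + 1 / inversion (n : ℂ) R ρ) ^ n - (1 + 1 / ρ) ^ n‖ ≤ 1 + 1 :=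
          norm_sub_le_of_le (hpow (inversion_natCast_re_le hρ hρR hρn)) (hpow hρ.le)
      _ ≤ 40 * n * ((R - dist ρ n) / R) := by
        rw [one_add_one_eq_two]
        exact two_le_mul_sub_dist_div hn hR hρ hρR hlow
  · exact (norm_one_add_inv_pow_sub_le (by omega) hρ hρR hρn hhigh).trans
      (five_mul_sq_sub_dist_sq_div_le hn hR hρ hρR)

end CriticalZeros

section ShiftedZeta

open Metric
open scoped Topology

/-- The entire function `s ζ(1 + s)`, whose logarithmic derivative near `0` is the function
`-g` of the theorem. -/
noncomputable def shiftedZeta₁ (s : ℂ) : ℂ := riemannZeta₁ (s + 1)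

lemma differentiable_shiftedZeta₁ : Differentiable ℂ shiftedZeta₁ :=
  differentiable_riemannZeta₁.comp (differentiable_id.add_const 1)

lemma shiftedZeta₁_zero : shiftedZeta₁ 0 = 1 := by
  rw [shiftedZeta₁, zero_add, riemannZeta₁_one]

lemma shiftedZeta₁_eq_mul {s : ℂ} (hs : s ≠ 0) : shiftedZeta₁ s = s * riemannZeta (s + 1) := by
  rw [shiftedZeta₁, riemannZeta₁_eq_sub_one_mul (by simpa), add_sub_cancel_right]

lemma ne_zero_of_shiftedZeta₁_eq_zero {s : ℂ} (h : shiftedZeta₁ s = 0) : s ≠ 0 := by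
  rintro rfl
  exact one_ne_zero (shiftedZeta₁_zero.symm.trans h)

lemma riemannZeta_add_one_eq_zero_of_shiftedZeta₁_eq_zero {s : ℂ} (h : shiftedZeta₁ s = 0) :
    riemannZeta (s + 1) = 0 := by
  have hs := ne_zero_of_shiftedZeta₁_eq_zero h
  rw [shiftedZeta₁_eq_mul hs] at h
  exact (mul_eq_zero.1 h).resolve_left hs

lemma re_eq_neg_half_of_shiftedZeta₁_eq_zero
    (RH : ∀ s : ℂ, 0 < s.re → s.re < 1 → riemannZeta s = 0 → s.re = 1 / 2)
    {s : ℂ} (hs : -1 < s.re) (h : shiftedZeta₁ s = 0) : s.re = -1 / 2 := by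
  have hζ := riemannZeta_add_one_eq_zero_of_shiftedZeta₁_eq_zero h
  have hre : (s + 1).re < 1 := by
    by_contra! hle
    exact riemannZeta_ne_zero_of_one_le_re hle hζ
  have hhalf := RH (s + 1) (by rw [add_re, one_re]; linarith) hre hζ
  rw [add_re, one_re] at hhalf
  linarith

lemma finite_inter_shiftedZeta₁_zeros {K : Set ℂ} (hK : IsCompact K) :
    (K ∩ {s | shiftedZeta₁ s = 0}).Finite :=
  ((hK.image (continuous_add_const 1)).inter_riemannZetaZeros_finite.preimage
    (add_left_injective 1).injOn).subset fun s hs ↦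
      ⟨⟨s, hs.1, rfl⟩, riemannZeta_add_one_eq_zero_of_shiftedZeta₁_eq_zero hs.2⟩

lemma exists_mem_Ioo_forall_sphere_shiftedZeta₁_ne_zero (c : ℂ) {a b : ℝ} (hab : a < b) :
    ∃ R ∈ Set.Ioo a b, ∀ z ∈ sphere c R, shiftedZeta₁ z ≠ 0 := by
  obtain ⟨R, hR, hRdist⟩ := (Set.Ioo_infinite hab).exists_notMem_finite
    ((finite_inter_shiftedZeta₁_zeros (isCompact_closedBall c b)).image (dist · c))
  exact ⟨R, hR, fun z hz h ↦
    hRdist ⟨z, ⟨(mem_sphere.1 hz).trans_le hR.2.le, h⟩, mem_sphere.1 hz⟩⟩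

lemma one_le_norm_riemannZeta_natCast_add_one {n : ℕ} (hn : 0 < n) :
    1 ≤ ‖riemannZeta (n + 1)‖ := by
  have hreal : riemannZeta (n + 1) = ((∑' m : ℕ, 1 / (m : ℝ) ^ (n + 1) : ℝ) : ℂ) := by
    rw [← Nat.cast_add_one, zeta_nat_eq_tsum_of_gt_one (by omega)]
    push_cast
    rfl
  have hone : 1 ≤ ∑' m : ℕ, 1 / (m : ℝ) ^ (n + 1) := by
    simpa using (Real.summable_one_div_nat_pow.2 (by omega : 1 < n + 1)).le_tsum 1
      fun m _ ↦ by positivity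
  rw [hreal, norm_real]
  exact hone.trans (Real.le_norm_self _)

lemma natCast_le_norm_shiftedZeta₁ {n : ℕ} (hn : 0 < n) : n ≤ ‖shiftedZeta₁ n‖ := by
  rw [shiftedZeta₁_eq_mul (by exact_mod_cast hn.ne'), norm_mul, Complex.norm_natCast]
  exact le_mul_of_one_le_right n.cast_nonneg (one_le_norm_riemannZeta_natCast_add_one hn)

lemma shiftedZeta₁_mem_gapDominated
    (RH : ∀ s : ℂ, 0 < s.re → s.re < 1 → riemannZeta s = 0 → s.re = 1 / 2)
    {n : ℕ} {R : ℝ} (hn : 2 ≤ n) (hR : R ∈ Set.Ioo (n + 7 / 10 : ℝ) (n + 4 / 5))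
    (h0 : 0 ∈ ball (n : ℂ) R) (hne : ∀ z ∈ sphere (n : ℂ) R, shiftedZeta₁ z ≠ 0) :
    shiftedZeta₁ ∈ gapDominated h0 n (40 * n) := by
  have hfin := finite_inter_shiftedZeta₁_zeros (isCompact_closedBall (n : ℂ) R)
  have hcenter : shiftedZeta₁ n ≠ 0 := norm_pos_iff.1 <|
    (Nat.cast_pos.2 (by omega)).trans_le (natCast_le_norm_shiftedZeta₁ (by omega))
  refine mem_gapDominated_of_sub_mem h0 hfin.toFinset (fun ρ hρ ↦ ?_)
    (fun z _ ↦ differentiable_shiftedZeta₁.analyticAt z) hcenter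
    fun z hz hz0 ↦ hfin.mem_toFinset.2 ⟨hz, hz0⟩
  obtain ⟨hρR, hρ0⟩ := hfin.mem_toFinset.1 hρ
  have hρball : ρ ∈ ball (n : ℂ) R :=
    lt_of_le_of_ne (mem_closedBall.1 hρR) fun h ↦ hne ρ h hρ0
  have hρn : ρ ≠ n := by
    rintro rfl
    exact hcenter hρ0
  have hre : -1 < ρ.re := by
    have h := (abs_le.1 (abs_re_le_norm (ρ - n))).1
    rw [sub_re, natCast_re, ← dist_eq_norm] at h
    linarith [mem_ball.1 hρball, hR.2]
  exact ⟨hρR, isJensenAdmissible_sub_const hρball hρn (ne_zero_of_shiftedZeta₁_eq_zero hρ0),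
    norm_liDefect_sub_le hn hR h0 (re_eq_neg_half_of_shiftedZeta₁_eq_zero RH hre hρ0) hρball hρn⟩

lemma logDeriv_shiftedZeta₁ {s : ℂ} (hs : s ≠ 0) (hζ : riemannZeta (s + 1) ≠ 0) :
    logDeriv shiftedZeta₁ s = 1 / s + deriv riemannZeta (s + 1) / riemannZeta (s + 1) := by
  have hζd : DifferentiableAt ℂ riemannZeta (s + 1) := differentiableAt_riemannZeta (by simpa)
  have heq : shiftedZeta₁ =ᶠ[𝓝 s] fun w ↦ w * riemannZeta (w + 1) := by
    filter_upwards [isOpen_ne.mem_nhds hs] with w hw using shiftedZeta₁_eq_mul hw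
  rw [logDeriv_apply, heq.deriv_eq, heq.eq_of_nhds, ← logDeriv_apply,
    logDeriv_mul (f := fun w ↦ w) s hs hζ differentiableAt_fun_id
      (differentiableAt_comp_add_const.2 hζd), logDeriv_id',
    logDeriv_apply, deriv_comp_add_const]

lemma eventuallyEq_neg_logDeriv_shiftedZeta₁ {g : ℂ → ℂ} (hg : AnalyticAt ℂ g 0)
    (hgeq : ∀ᶠ s in 𝓝[≠] 0, g s = -deriv riemannZeta (s + 1) / riemannZeta (s + 1) - 1 / s) :
    g =ᶠ[𝓝 0] -logDeriv shiftedZeta₁ := by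
  have hF0 : shiftedZeta₁ 0 ≠ 0 := shiftedZeta₁_zero ▸ one_ne_zero
  have han := analyticAt_logDeriv (differentiable_shiftedZeta₁.analyticAt 0) hF0
  refine (hg.frequently_eq_iff_eventually_eq han.neg).1 (Filter.Eventually.frequently ?_)
  have hF : ∀ᶠ s in 𝓝[≠] (0 : ℂ), shiftedZeta₁ s ≠ 0 :=
    (differentiable_shiftedZeta₁.continuous.continuousAt.eventually_ne hF0).filter_mono
      nhdsWithin_le_nhds
  filter_upwards [hgeq, hF, self_mem_nhdsWithin] with s hgs hFs hs
  rw [shiftedZeta₁_eq_mul hs] at hFs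
  rw [hgs, Pi.neg_apply, logDeriv_shiftedZeta₁ hs (right_ne_zero_of_mul hFs)]
  ring

end ShiftedZeta

section WeightBound

open Metric

lemma norm_one_add_inv_sq {z : ℂ} (hz : z ≠ 0) :
    ‖1 + 1 / z‖ ^ 2 = 1 + (2 * z.re + 1) / ‖z‖ ^ 2 := by
  rw [one_add_div hz, norm_div, div_pow, one_add_div (pow_ne_zero 2 (norm_ne_zero_iff.2 hz))]
  congr 1
  simp only [Complex.sq_norm, normSq_apply, add_re, add_im, one_re, one_im]
  ring

lemma norm_one_add_inv_sq_le_exp {n : ℕ} {R : ℝ} {z : ℂ} (hn : 0 < n) (hR : n + 7 / 10 < R)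
    (hz : z ∈ sphere (n : ℂ) R) (hz0 : z ≠ 0) :
    ‖1 + 1 / z‖ ^ 2 ≤ Real.exp (1 / n - 2 / 5 / ‖z‖ ^ 2) := by
  have hn0 : (0 : ℝ) < n := mod_cast hn
  have hsphere : (z.re - n) ^ 2 + z.im ^ 2 = R ^ 2 := by
    rw [← mem_sphere.1 hz, dist_eq_norm, Complex.sq_norm, normSq_apply]
    simp [sq]
  have hq : ‖z‖ ^ 2 = z.re ^ 2 + z.im ^ 2 := by rw [Complex.sq_norm, normSq_apply, sq, sq]
  have hre : (2 * z.re + 1) / ‖z‖ ^ 2 ≤ 1 / n - 2 / 5 / ‖z‖ ^ 2 := by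
    have hq0 : 0 < ‖z‖ ^ 2 := by positivity
    rw [le_sub_iff_add_le, ← add_div, div_le_div_iff₀ hq0 hn0, hq]
    nlinarith
  rw [norm_one_add_inv_sq hz0, add_comm]
  exact (add_le_add_left hre 1).trans (Real.add_one_le_exp _)

lemma norm_one_add_inv_pow_le_exp {n : ℕ} {R : ℝ} {z : ℂ} (hn : 2 ≤ n)
    (hR : n + 7 / 10 < R) (hz : z ∈ sphere (n : ℂ) R) (hz0 : z ≠ 0) :
    ‖1 + 1 / z‖ ^ (n - 1) ≤ Real.exp (1 / 2 - n / ‖z‖ ^ 2 / 10) := by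
  have hn2 : (2 : ℝ) ≤ n := mod_cast hn
  refine (pow_le_pow_iff_left₀ (by positivity) (Real.exp_pos _).le two_ne_zero).1 ?_
  calc (‖1 + 1 / z‖ ^ (n - 1)) ^ 2 = (‖1 + 1 / z‖ ^ 2) ^ (n - 1) := pow_right_comm ..
    _ ≤ Real.exp (1 / n - 2 / 5 / ‖z‖ ^ 2) ^ (n - 1) := by
      gcongr
      exact norm_one_add_inv_sq_le_exp (by omega) hR hz hz0
    _ = Real.exp ((n - 1) * (1 / n - 2 / 5 / ‖z‖ ^ 2)) := by
      rw [← Real.exp_nat_mul, Nat.cast_pred (by omega)]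
    _ ≤ Real.exp ((2 : ℕ) * (1 / 2 - n / ‖z‖ ^ 2 / 10)) := by
      refine Real.exp_le_exp.2 ?_
      have h₁ : (n - 1) * (1 / n) ≤ (1 : ℝ) := by
        rw [mul_one_div]
        exact div_le_one_of_le₀ (by linarith) (by linarith)
      have h₂ : n / ‖z‖ ^ 2 / 5 ≤ (n - 1) * (2 / 5 / ‖z‖ ^ 2) := by
        rw [div_right_comm, ← mul_div_assoc]
        gcongr
        linarith
      push_cast
      linarith
    _ = Real.exp (1 / 2 - n / ‖z‖ ^ 2 / 10) ^ 2 := Real.exp_nat_mul ..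

lemma mul_exp_half_sub_div_ten_le (x : ℝ) : x * Real.exp (1 / 2 - x / 10) ≤ 20 := by
  have hhalf : Real.exp (1 / 2) ≤ 2 := by
    have h : Real.exp (1 / 2) ^ 2 = Real.exp 1 := by rw [← Real.exp_nat_mul]; norm_num
    nlinarith [Real.exp_one_lt_d9, Real.exp_pos (1 / 2)]
  have hx : x ≤ 10 * Real.exp (x / 10) := by linarith [Real.add_one_le_exp (x / 10)]
  calc x * Real.exp (1 / 2 - x / 10)
      ≤ 10 * Real.exp (x / 10) * Real.exp (1 / 2 - x / 10) := by gcongr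
    _ = 10 * Real.exp (1 / 2) := by rw [mul_assoc, ← Real.exp_add, add_sub_cancel]
    _ ≤ 20 := by linarith

lemma norm_liWeight_le {n : ℕ} {R : ℝ} {z : ℂ} (hn : 2 ≤ n)
    (hR : R ∈ Set.Ioo (n + 7 / 10 : ℝ) (n + 4 / 5)) (hz : z ∈ sphere (n : ℂ) R) (hz0 : z ≠ 0) :
    ‖liWeight n n z‖ ≤ 60 * n := by
  have hn2 : (2 : ℝ) ≤ n := mod_cast hn
  have hkernel : n / ‖z‖ ^ 2 * ‖1 + 1 / z‖ ^ (n - 1) ≤ 20 := by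
    refine le_trans ?_ (mul_exp_half_sub_div_ten_le (n / ‖z‖ ^ 2))
    gcongr
    exact norm_one_add_inv_pow_le_exp hn hR.1 hz hz0
  calc ‖liWeight n n z‖ = 2 * (R * (n / ‖z‖ ^ 2 * ‖1 + 1 / z‖ ^ (n - 1))) := by
        rw [liWeight, norm_mul, norm_mul, norm_mul, norm_div, norm_pow, norm_pow,
          Complex.norm_natCast, Complex.norm_ofNat, ← dist_eq_norm, mem_sphere.1 hz]
    _ ≤ 2 * ((3 / 2 * n) * 20) := by
      gcongr
      linarith [hR.2]
    _ = 60 * n := by ring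

end WeightBound

section HalfPlaneAverage

open Metric Real

variable {c z : ℂ} {R : ℝ}

lemma zero_le_re_sub_add_of_mem_sphere (hz : z ∈ sphere c R) : 0 ≤ (z - c).re + R := by
  have h := (abs_le.1 (abs_re_le_norm (z - c))).1
  rw [← dist_eq_norm, mem_sphere.1 hz] at h
  linarith

lemma continuousOn_one_div_one_add_re_sub_add (c : ℂ) (R : ℝ) :
    ContinuousOn (fun z : ℂ ↦ 1 / (1 + ((z - c).re + R))) (sphere c R) := by
  refine continuousOn_const.div (by fun_prop) fun z hz ↦ ?_
  have := zero_le_re_sub_add_of_mem_sphere hz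
  positivity

lemma norm_sub_sub_sq_of_mem_sphere (hz : z ∈ sphere c R) (x : ℝ) :
    ‖z - c - (c - x - c)‖ ^ 2 = (R - x) ^ 2 + 2 * x * ((z - c).re + R) := by
  have hsphere : (z - c).re ^ 2 + (z - c).im ^ 2 = R ^ 2 := by
    rw [← mem_sphere.1 hz, dist_eq_norm, Complex.sq_norm, normSq_apply, sq, sq]
  rw [sub_sub_cancel_left, sub_neg_eq_add, Complex.sq_norm, normSq_apply]
  simp only [add_re, add_im, ofReal_re, ofReal_im]
  linear_combination hsphere

lemma circleAverage_poissonKernel {w : ℂ} (hw : w ∈ ball c R) :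
    circleAverage (poissonKernel c w) c R = 1 := by
  simpa only [← Pi.one_def, smul_eq_mul, mul_one, Pi.one_apply] using
    (InnerProductSpace.harmonicContOnCl_const (c := (1 : ℝ))).circleAverage_poissonKernel_smul hw

lemma poissonKernel_sub_ofReal_of_mem_sphere (hz : z ∈ sphere c R) (x : ℝ) :
    poissonKernel c (c - x) z =
      (R ^ 2 - x ^ 2) / ((R - x) ^ 2 + 2 * x * ((z - c).re + R)) := by
  rw [poissonKernel_def, norm_sub_sub_sq_of_mem_sphere hz, ← dist_eq_norm, mem_sphere.1 hz,
    sub_sub_cancel_left, norm_neg, norm_real, Real.norm_eq_abs, sq_abs]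

lemma continuousOn_poissonKernel_sphere {w : ℂ} (hw : w ∈ ball c R) :
    ContinuousOn (poissonKernel c w) (sphere c R) := by
  unfold poissonKernel
  refine ContinuousOn.div (by fun_prop) (by fun_prop) fun z hz ↦ ?_
  rw [sub_sub_sub_cancel_right]
  exact pow_ne_zero 2 (norm_ne_zero_iff.2 (sub_ne_zero_of_mem_ball_of_mem_sphere hw hz))

lemma one_div_one_add_re_sub_add_le_poissonKernel (hR : 1 < R) (hz : z ∈ sphere c R) :
    1 / (1 + ((z - c).re + R)) ≤ 2 / √R * poissonKernel c (c - (R - √R : ℝ)) z := by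
  have hR0 : 0 < R := one_pos.trans hR
  have hr0 : 0 < √R := Real.sqrt_pos.2 hR0
  have hrr : √R ^ 2 = R := Real.sq_sqrt hR0.le
  have hx : 0 < R - √R := sub_pos.2 (Real.sqrt_lt_self_iff.2 hR)
  have hy := zero_le_re_sub_add_of_mem_sphere hz
  rw [poissonKernel_sub_ofReal_of_mem_sphere hz]
  set x := R - √R with hxdef
  set y := (z - c).re + R
  have hnum : R ^ 2 - x ^ 2 = √R * (R + x) := by rw [hxdef]; ring
  have hden : (R - x) ^ 2 = R := by rw [hxdef, sub_sub_cancel, hrr]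
  rw [hnum, hden, div_mul_div_comm, mul_left_comm, mul_div_mul_left _ _ hr0.ne',
    div_le_div_iff₀ (by positivity) (by positivity)]
  nlinarith

lemma circleAverage_one_div_one_add_re_sub_add_le (c : ℂ) (hR : 1 < R) :
    circleAverage (fun z ↦ 1 / (1 + ((z - c).re + R))) c R ≤ 2 / √R := by
  have hR0 : 0 < R := one_pos.trans hR
  have hw : c - (R - √R : ℝ) ∈ ball c R := by
    have h1 : √R ≤ R := (Real.sqrt_lt_self_iff.2 hR).le
    rw [mem_ball, dist_self_sub_left, norm_real, Real.norm_of_nonneg (sub_nonneg.2 h1)]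
    exact sub_lt_self _ (Real.sqrt_pos.2 hR0)
  calc circleAverage (fun z ↦ 1 / (1 + ((z - c).re + R))) c R
      ≤ circleAverage (fun z ↦ (2 / √R) • poissonKernel c (c - (R - √R : ℝ)) z) c R := by
        refine circleAverage_mono
          ((continuousOn_one_div_one_add_re_sub_add c R).circleIntegrable hR0.le)
          (((continuousOn_poissonKernel_sphere hw).fun_const_smul _).circleIntegrable hR0.le)
          fun z hz ↦ ?_
        rw [abs_of_pos hR0] at hz
        exact one_div_one_add_re_sub_add_le_poissonKernel hR hz
    _ = 2 / √R := by
      rw [circleAverage_fun_smul, circleAverage_poissonKernel hw, smul_eq_mul, mul_one]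

end HalfPlaneAverage

section ZetaOnCircle

open Metric

lemma log_norm_riemannZeta_add_one_le_inv {z : ℂ} (hz : 0 < z.re) :
    Real.log ‖riemannZeta (z + 1)‖ ≤ 1 / z.re := by
  have hre : 1 < (z + 1).re := by rwa [add_re, one_re, lt_add_iff_pos_left]
  have hζ := riemannZeta_ne_zero_of_one_le_re hre.le
  have hnorm := norm_riemannZeta_le_of_one_lt_re hre
  rw [add_re, one_re, add_sub_cancel_right] at hnorm
  linarith [Real.log_le_sub_one_of_pos (norm_pos_iff.2 hζ)]

lemma half_le_log_natCast {n : ℕ} (hn : 2 ≤ n) : 1 / 2 ≤ Real.log n := by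
  have := Real.log_le_log two_pos (Nat.ofNat_le_cast.2 hn)
  linarith [Real.log_two_gt_d9]

lemma norm_riemannZeta_add_one_le_of_mem_sphere {C : ℝ} (hC0 : 0 ≤ C)
    (hC : ∀ w : ℂ, 1 / 5 ≤ w.re → ‖riemannZeta₁ w‖ ≤ C * (1 + ‖w‖) ^ 2)
    {n : ℕ} {R : ℝ} {z : ℂ} (hn : 2 ≤ n) (hR : R ∈ Set.Ioo (n + 7 / 10 : ℝ) (n + 4 / 5))
    (hz : z ∈ sphere (n : ℂ) R) : ‖riemannZeta (z + 1)‖ ≤ 32 * C * n ^ 2 := by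
  have hn2 : (2 : ℝ) ≤ n := mod_cast hn
  have hzR : ‖z - n‖ = R := by rw [← dist_eq_norm, mem_sphere.1 hz]
  have hre : 1 / 5 ≤ (z + 1).re := by
    have h := zero_le_re_sub_add_of_mem_sphere hz
    rw [sub_re, natCast_re] at h
    rw [add_re, one_re]
    linarith [hR.2]
  have hlow : 7 / 10 ≤ ‖z‖ := by
    have h := norm_sub_le z n
    rw [hzR, Complex.norm_natCast] at h
    linarith [hR.1]
  have hup : 1 + ‖z + 1‖ ≤ 4 * n := by
    have h := norm_add₃_le (a := z - n) (b := n) (c := 1)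
    rw [sub_add_cancel, hzR, Complex.norm_natCast, norm_one] at h
    linarith [hR.2]
  have hz0 : z + 1 ≠ 1 := by
    rw [Ne, add_eq_right]
    rintro rfl
    norm_num at hlow
  have hmul : ‖z‖ * ‖riemannZeta (z + 1)‖ ≤ C * (4 * n) ^ 2 :=
    calc ‖z‖ * ‖riemannZeta (z + 1)‖ = ‖riemannZeta₁ (z + 1)‖ := by
          rw [riemannZeta₁_eq_sub_one_mul hz0, add_sub_cancel_right, norm_mul]
      _ ≤ C * (1 + ‖z + 1‖) ^ 2 := hC _ hre
      _ ≤ C * (4 * n) ^ 2 := by gcongr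
  have hpos : 0 ≤ C * (n : ℝ) ^ 2 := by positivity
  linarith [mul_le_mul_of_nonneg_right hlow (norm_nonneg (riemannZeta (z + 1)))]

lemma exists_log_norm_riemannZeta_add_one_le_mul_log : ∃ B : ℝ, 0 ≤ B ∧
    ∀ n : ℕ, 2 ≤ n → ∀ R ∈ Set.Ioo (n + 7 / 10 : ℝ) (n + 4 / 5), ∀ z ∈ sphere (n : ℂ) R,
      riemannZeta (z + 1) ≠ 0 → Real.log ‖riemannZeta (z + 1)‖ ≤ B * Real.log n := by
  obtain ⟨C, hC1, hC⟩ := exists_norm_riemannZeta₁_le (σ := 1 / 5) (by norm_num)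
  have hlogC : 0 ≤ Real.log (32 * C) := Real.log_nonneg (by linarith)
  refine ⟨2 * Real.log (32 * C) + 2, by positivity, fun n hn R hR z hz hζ ↦ ?_⟩
  calc Real.log ‖riemannZeta (z + 1)‖ ≤ Real.log (32 * C * n ^ 2) :=
        Real.log_le_log (norm_pos_iff.2 hζ)
          (norm_riemannZeta_add_one_le_of_mem_sphere (by linarith) hC hn hR hz)
    _ = Real.log (32 * C) + 2 * Real.log n := by
      rw [Real.log_mul (by positivity) (by positivity), Real.log_pow]
      rfl
    _ ≤ (2 * Real.log (32 * C) + 2) * Real.log n := by nlinarith [half_le_log_natCast hn]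

lemma exists_log_norm_riemannZeta_add_one_le : ∃ B : ℝ, 0 ≤ B ∧
    ∀ n : ℕ, 2 ≤ n → ∀ R ∈ Set.Ioo (n + 7 / 10 : ℝ) (n + 4 / 5), ∀ z ∈ sphere (n : ℂ) R,
      riemannZeta (z + 1) ≠ 0 →
        Real.log ‖riemannZeta (z + 1)‖ ≤ B * Real.log n * (1 / (1 + ((z - n).re + R))) := by
  obtain ⟨B, hB0, hB⟩ := exists_log_norm_riemannZeta_add_one_le_mul_log
  refine ⟨3 * B + 6, by positivity, fun n hn R hR z hz hζ ↦ ?_⟩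
  have hlog := half_le_log_natCast hn
  have hden := zero_le_re_sub_add_of_mem_sphere hz
  rw [mul_one_div, le_div_iff₀ (by linarith)]
  rw [sub_re, natCast_re] at hden ⊢
  rcases le_or_gt 1 z.re with hre | hre
  · calc Real.log ‖riemannZeta (z + 1)‖ * (1 + (z.re - n + R)) ≤ 1 / z.re * (3 * z.re) := by
          gcongr
          · exact log_norm_riemannZeta_add_one_le_inv (by linarith)
          · linarith [hR.2]
      _ = 3 := by field_simp
      _ ≤ (3 * B + 6) * Real.log n := by nlinarith
  · calc Real.log ‖riemannZeta (z + 1)‖ * (1 + (z.re - n + R)) ≤ B * Real.log n * 3 := by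
          gcongr
          · exact hB n hn R hR z hz hζ
          · linarith [hR.2]
      _ ≤ (3 * B + 6) * Real.log n := by linarith

end ZetaOnCircle

section LiSumBound

open Metric Real

variable {c : ℂ} {R V : ℝ} {n : ℕ}

lemma norm_circleAverage_le (f : ℂ → ℂ) (c : ℂ) (R : ℝ) :
    ‖circleAverage f c R‖ ≤ circleAverage (fun z ↦ ‖f z‖) c R := by
  rw [circleAverage, circleAverage, norm_smul, smul_eq_mul,
    Real.norm_of_nonneg (inv_nonneg.2 two_pi_pos.le)]
  gcongr
  exact intervalIntegral.norm_integral_le_integral_norm two_pi_pos.le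

lemma norm_liBoundary_le (h0 : 0 ∈ ball c R) {u W : ℂ → ℝ} {M : ℝ} (hM : 0 ≤ M)
    (hu : ContinuousOn u (sphere c R)) (hW : ContinuousOn W (sphere c R))
    (hweight : ∀ z ∈ sphere c R, ‖liWeight c n z‖ ≤ M) (hW0 : ∀ z ∈ sphere c R, 0 ≤ W z)
    (huW : ∀ z ∈ sphere c R, u z ≤ W z) :
    ‖liBoundary c R n u‖ ≤ M * (2 * circleAverage W c R - circleAverage u c R) := by
  have hR : 0 < R := pos_of_mem_ball h0
  have hWi := hW.circleIntegrable hR.le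
  have hui := hu.circleIntegrable hR.le
  have h2Wi : CircleIntegrable (fun z ↦ (2 : ℝ) • W z) c R := hWi.const_fun_smul
  calc ‖liBoundary c R n u‖ ≤ circleAverage (fun z ↦ ‖liWeight c n z * u z‖) c R :=
        norm_circleAverage_le ..
    _ ≤ circleAverage (fun z ↦ M • ((2 : ℝ) • W z - u z)) c R := by
      refine circleAverage_mono (circleIntegrable_liWeight_mul h0 hu n).norm
        (h2Wi.sub hui).const_fun_smul fun z hz ↦ ?_
      rw [abs_of_pos hR] at hz
      have habs : |u z| ≤ 2 * W z - u z :=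
        abs_le.2 ⟨by linarith [hW0 z hz], by linarith [huW z hz]⟩
      rw [norm_mul, norm_real]
      exact mul_le_mul (hweight z hz) habs (abs_nonneg _) hM
    _ = M * (2 * circleAverage W c R - circleAverage u c R) := by
      rw [circleAverage_fun_smul, circleAverage_fun_sub h2Wi hui, circleAverage_fun_smul,
        smul_eq_mul, smul_eq_mul]

lemma zero_mem_ball_natCast (hR : n < R) : (0 : ℂ) ∈ ball (n : ℂ) R := by
  rwa [mem_ball, dist_zero_left, Complex.norm_natCast]

lemma norm_liBoundary_log_norm_le_two (hn : 0 < n) (hR : n + 7 / 10 < R) :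
    ‖liBoundary n R n (fun z ↦ Real.log ‖z‖)‖ ≤ 2 := by
  have hn0 : (0 : ℝ) < n := mod_cast hn
  have h0 : (0 : ℂ) ∈ ball (n : ℂ) R := zero_mem_ball_natCast (by linarith)
  have hre : (EuclideanGeometry.inversion (n : ℂ) R 0).re ≤ -1 / 2 := by
    rw [inversion_eq_ofReal_mul, add_re, re_ofReal_mul, zero_sub, neg_re, natCast_re,
      dist_zero_left, Complex.norm_natCast]
    have hsq : n + 1 / 2 ≤ (R / n) ^ 2 * n := by
      rw [show (R / n) ^ 2 * n = R ^ 2 / n by field_simp, le_div_iff₀ hn0]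
      nlinarith
    linarith
  have h := liBoundary_log_norm_sub h0 h0 (by exact_mod_cast hn.ne) n
  simp only [sub_zero] at h
  rw [h, ← one_add_one_eq_two]
  refine norm_sub_le_of_le norm_one.le ?_
  rw [norm_pow]
  exact pow_le_one₀ (norm_nonneg _) (norm_one_add_inv_le_one hre)

lemma log_norm_shiftedZeta₁ {z : ℂ} (hz : shiftedZeta₁ z ≠ 0) (hz0 : z ≠ 0) :
    Real.log ‖shiftedZeta₁ z‖ = Real.log ‖z‖ + Real.log ‖riemannZeta (z + 1)‖ := by
  rw [shiftedZeta₁_eq_mul hz0] at hz ⊢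
  rw [norm_mul, Real.log_mul (norm_ne_zero_iff.2 hz0)
    (norm_ne_zero_iff.2 (right_ne_zero_of_mul hz))]

lemma log_sub_log_natCast_le (hn : 0 < n) (hR : R ∈ Set.Ioo (n + 7 / 10 : ℝ) (n + 4 / 5)) :
    Real.log R - Real.log n ≤ 4 / 5 / n := by
  have hn0 : (0 : ℝ) < n := mod_cast hn
  have hR0 : 0 < R := by linarith [hR.1]
  rw [← Real.log_div hR0.ne' hn0.ne']
  refine (Real.log_le_sub_one_of_pos (div_pos hR0 hn0)).trans ?_
  rw [div_sub_one hn0.ne']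
  gcongr
  linarith [hR.2]

lemma continuousOn_log_norm_riemannZeta_add_one (h0 : 0 ∈ ball c R)
    (hne : ∀ z ∈ sphere c R, shiftedZeta₁ z ≠ 0) :
    ContinuousOn (fun z ↦ Real.log ‖riemannZeta (z + 1)‖) (sphere c R) := by
  intro z hz
  have hz0 : z ≠ 0 := ne_zero_of_mem_sphere_of_zero_mem_ball h0 hz
  have hζ : riemannZeta (z + 1) ≠ 0 :=
    right_ne_zero_of_mul (shiftedZeta₁_eq_mul hz0 ▸ hne z hz)
  have hd : DifferentiableAt ℂ (fun z ↦ riemannZeta (z + 1)) z :=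
    differentiableAt_comp_add_const.2 (differentiableAt_riemannZeta (by simpa))
  exact (hd.continuousAt.norm.log (norm_ne_zero_iff.2 hζ)).continuousWithinAt

lemma circleAverage_log_norm_shiftedZeta₁ (h0 : 0 ∈ ball c R)
    (hne : ∀ z ∈ sphere c R, shiftedZeta₁ z ≠ 0) :
    circleAverage (fun z ↦ Real.log ‖shiftedZeta₁ z‖) c R =
      Real.log R + circleAverage (fun z ↦ Real.log ‖riemannZeta (z + 1)‖) c R := by
  have hR : 0 < R := pos_of_mem_ball h0
  have hlog : circleAverage (fun z ↦ Real.log ‖z‖) c R = Real.log R := by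
    simpa using circleAverage_log_norm_sub_const_of_mem_closedBall (a := 0) (c := c) (R := R)
      (by rw [abs_of_pos hR]; exact ball_subset_closedBall h0)
  have hlogc : ContinuousOn (fun z : ℂ ↦ Real.log ‖z‖) (sphere c R) :=
    continuous_norm.continuousOn.log fun z hz ↦
      norm_ne_zero_iff.2 (ne_zero_of_mem_sphere_of_zero_mem_ball h0 hz)
  rw [← hlog, ← circleAverage_fun_add (hlogc.circleIntegrable hR.le)
    ((continuousOn_log_norm_riemannZeta_add_one h0 hne).circleIntegrable hR.le)]
  refine circleAverage_congr_sphere fun z hz ↦ ?_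
  rw [abs_of_pos hR] at hz
  exact log_norm_shiftedZeta₁ (hne z hz) (ne_zero_of_mem_sphere_of_zero_mem_ball h0 hz)

lemma jensenGap_shiftedZeta₁_le (hn : 0 < n) (hR : R ∈ Set.Ioo (n + 7 / 10 : ℝ) (n + 4 / 5))
    (hne : ∀ z ∈ sphere (n : ℂ) R, shiftedZeta₁ z ≠ 0) :
    jensenGap n R shiftedZeta₁ ≤
      circleAverage (fun z ↦ Real.log ‖riemannZeta (z + 1)‖) n R + 4 / 5 / n := by
  have hcenter : Real.log n ≤ Real.log ‖shiftedZeta₁ n‖ :=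
    Real.log_le_log (mod_cast hn) (natCast_le_norm_shiftedZeta₁ hn)
  rw [jensenGap,
    circleAverage_log_norm_shiftedZeta₁ (zero_mem_ball_natCast (by linarith [hR.1])) hne]
  linarith [log_sub_log_natCast_le hn hR]

lemma norm_liBoundary_log_norm_shiftedZeta₁_le (hn : 2 ≤ n)
    (hR : R ∈ Set.Ioo (n + 7 / 10 : ℝ) (n + 4 / 5))
    (hne : ∀ z ∈ sphere (n : ℂ) R, shiftedZeta₁ z ≠ 0) (hV : 0 ≤ V)
    (hζ : ∀ z ∈ sphere (n : ℂ) R,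
      Real.log ‖riemannZeta (z + 1)‖ ≤ V * (1 / (1 + ((z - n).re + R)))) :
    ‖liBoundary n R n (fun z ↦ Real.log ‖shiftedZeta₁ z‖)‖ ≤ 60 * n *
      (2 * (V * (2 / √R)) - circleAverage (fun z ↦ Real.log ‖riemannZeta (z + 1)‖) n R) + 2 := by
  have hn2 : (2 : ℝ) ≤ n := mod_cast hn
  have h0 : (0 : ℂ) ∈ ball (n : ℂ) R := zero_mem_ball_natCast (by linarith [hR.1])
  have hz0 {z : ℂ} (hz : z ∈ sphere (n : ℂ) R) : z ≠ 0 :=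
    ne_zero_of_mem_sphere_of_zero_mem_ball h0 hz
  have hζc := continuousOn_log_norm_riemannZeta_add_one h0 hne
  have hlogc : ContinuousOn (fun z : ℂ ↦ Real.log ‖z‖) (sphere n R) :=
    continuous_norm.continuousOn.log fun z hz ↦ norm_ne_zero_iff.2 (hz0 hz)
  have hWavg : circleAverage (fun z ↦ V * (1 / (1 + ((z - n).re + R)))) n R ≤ V * (2 / √R) := by
    simp_rw [← smul_eq_mul V]
    rw [circleAverage_fun_smul]
    exact mul_le_mul_of_nonneg_left
      (circleAverage_one_div_one_add_re_sub_add_le n (by linarith [hR.1])) hV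
  have hζbdry := norm_liBoundary_le (n := n) h0 (by positivity) hζc
    (continuousOn_const.fun_mul (continuousOn_one_div_one_add_re_sub_add n R))
    (fun z hz ↦ norm_liWeight_le hn hR hz (hz0 hz))
    (fun z hz ↦ mul_nonneg hV (by
      have := zero_le_re_sub_add_of_mem_sphere hz
      positivity)) hζ
  rw [liBoundary_congr (v := fun z ↦ Real.log ‖riemannZeta (z + 1)‖ + Real.log ‖z‖)
      (fun z hz ↦ ?_) n, liBoundary_add h0 hζc hlogc]
  · refine norm_add_le_of_le (hζbdry.trans ?_)
      (norm_liBoundary_log_norm_le_two (by omega) hR.1)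
    gcongr
  · rw [abs_of_pos (pos_of_mem_ball h0)] at hz
    rw [log_norm_shiftedZeta₁ (hne z hz) (hz0 hz), add_comm]

lemma natCast_mul_two_div_sqrt_le (hR : n ≤ R) : n * (2 / √R) ≤ 2 * √n := by
  rcases n.eq_zero_or_pos with rfl | hn
  · simp
  calc n * (2 / √R) ≤ n * (2 / √n) := by gcongr
    _ = 2 * √n := by rw [mul_div_left_comm, Real.div_sqrt]

lemma norm_liSum_logDeriv_shiftedZeta₁_le
    (RH : ∀ s : ℂ, 0 < s.re → s.re < 1 → riemannZeta s = 0 → s.re = 1 / 2) (hn : 2 ≤ n)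
    (hR : R ∈ Set.Ioo (n + 7 / 10 : ℝ) (n + 4 / 5))
    (hne : ∀ z ∈ sphere (n : ℂ) R, shiftedZeta₁ z ≠ 0) (hV : 0 ≤ V)
    (hζ : ∀ z ∈ sphere (n : ℂ) R,
      Real.log ‖riemannZeta (z + 1)‖ ≤ V * (1 / (1 + ((z - n).re + R)))) :
    ‖liSum n (logDeriv shiftedZeta₁)‖ ≤ 240 * V * √n + 50 := by
  have hdefect : ‖liDefect n R n shiftedZeta₁‖ ≤ 40 * n * jensenGap n R shiftedZeta₁ :=
    (shiftedZeta₁_mem_gapDominated RH hn hR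
      (zero_mem_ball_natCast (by linarith [hR.1])) hne).2
  have hgap0 : 0 ≤ jensenGap n R shiftedZeta₁ :=
    (mul_nonneg_iff_of_pos_left (by positivity)).1 ((norm_nonneg _).trans hdefect)
  have hgap := jensenGap_shiftedZeta₁_le (by omega) hR hne
  have hbdry := norm_liBoundary_log_norm_shiftedZeta₁_le hn hR hne hV hζ
  set a := circleAverage (fun z ↦ Real.log ‖riemannZeta (z + 1)‖) n R
  calc ‖liSum n (logDeriv shiftedZeta₁)‖
      = ‖liDefect n R n shiftedZeta₁ + liBoundary n R n (fun z ↦ Real.log ‖shiftedZeta₁ z‖)‖ := by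
        rw [liDefect, sub_add_cancel]
    _ ≤ 40 * n * jensenGap n R shiftedZeta₁ + (60 * n * (2 * (V * (2 / √R)) - a) + 2) :=
      norm_add_le_of_le hdefect hbdry
    _ ≤ 40 * n * (a + 4 / 5 / n) + (60 * n * (2 * (V * (2 / √R)) - a) + 2) := by gcongr
    _ = 120 * V * (n * (2 / √R)) - 20 * n * (a + 4 / 5 / n) + 50 := by field_simp; ring
    _ ≤ 240 * V * √n + 50 := by
      have h₁ : 120 * V * (n * (2 / √R)) ≤ 120 * V * (2 * √n) := by
        gcongr 120 * V * ?_
        exact natCast_mul_two_div_sqrt_le (by linarith [hR.1])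
      have h₂ : 0 ≤ 20 * n * (a + 4 / 5 / n) := mul_nonneg (by positivity) (hgap0.trans hgap)
      linarith

lemma exists_norm_liSum_logDeriv_shiftedZeta₁_le
    (RH : ∀ s : ℂ, 0 < s.re → s.re < 1 → riemannZeta s = 0 → s.re = 1 / 2) :
    ∃ C : ℝ, 0 < C ∧ ∀ n : ℕ, 2 ≤ n →
      ‖liSum n (logDeriv shiftedZeta₁)‖ ≤ C * √n * Real.log n := by
  obtain ⟨B, hB0, hB⟩ := exists_log_norm_riemannZeta_add_one_le
  refine ⟨240 * B + 100, by positivity, fun n hn ↦ ?_⟩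
  have hlog := half_le_log_natCast hn
  have hsqrt : 1 ≤ √n := Real.one_le_sqrt.2 (by exact_mod_cast (by omega : 1 ≤ n))
  obtain ⟨R, hR, hne⟩ := exists_mem_Ioo_forall_sphere_shiftedZeta₁_ne_zero n
    (by norm_num : (n + 7 / 10 : ℝ) < n + 4 / 5)
  have h0 : (0 : ℂ) ∈ ball (n : ℂ) R := zero_mem_ball_natCast (by linarith [hR.1])
  calc ‖liSum n (logDeriv shiftedZeta₁)‖ ≤ 240 * (B * Real.log n) * √n + 50 := by
        refine norm_liSum_logDeriv_shiftedZeta₁_le RH hn hR hne (by positivity) fun z hz ↦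
          hB n hn R hR z hz (right_ne_zero_of_mul (a := z) ?_)
        exact shiftedZeta₁_eq_mul (ne_zero_of_mem_sphere_of_zero_mem_ball h0 hz) ▸ hne z hz
    _ ≤ (240 * B + 100) * √n * Real.log n := by nlinarith

end LiSumBound

/-- **Lemma 4.4 for the Riemann zeta function.** Assume the Riemann Hypothesis. If `g` is
analytic on the disk `|s| < 1/2` with `g(s) = -ζ'(s+1)/ζ(s+1) - 1/s` for `0 < |s| < 1/2`,
and `η_l = g^{(l)}(0)/l!`, then `∑_{l=1}^n C(n,l) η_{l-1} = O(√n log n)`. -/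
theorem li_stieltjes_sum_bound
    (RH : ∀ s : ℂ, 0 < s.re → s.re < 1 → riemannZeta s = 0 → s.re = 1 / 2)
    (g : ℂ → ℂ) (hg : AnalyticOnNhd ℂ g (Metric.ball (0 : ℂ) (1 / 2)))
    (hgeq : ∀ s : ℂ, 0 < ‖s‖ → ‖s‖ < 1 / 2 →
      g s = -deriv riemannZeta (s + 1) / riemannZeta (s + 1) - 1 / s)
    (η : ℕ → ℂ) (hη : ∀ l : ℕ, η l = iteratedDeriv l g 0 / (l.factorial : ℂ)) :
    ∃ C : ℝ, 0 < C ∧ ∀ n : ℕ, 2 ≤ n →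
      ‖∑ l ∈ Finset.Icc 1 n, (n.choose l : ℂ) * η (l - 1)‖ ≤
        C * Real.sqrt n * Real.log n := by
  have hgeq' : ∀ᶠ s in nhdsWithin 0 {0}ᶜ,
      g s = -deriv riemannZeta (s + 1) / riemannZeta (s + 1) - 1 / s := by
    filter_upwards [nhdsWithin_le_nhds (Metric.ball_mem_nhds (0 : ℂ) one_half_pos),
      self_mem_nhdsWithin] with s hs hs0
    exact hgeq s (norm_pos_iff.2 hs0) (mem_ball_zero_iff.1 hs)
  have hlogDeriv := eventuallyEq_neg_logDeriv_shiftedZeta₁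
    (hg 0 (Metric.mem_ball_self one_half_pos)) hgeq'
  obtain ⟨C, hC, hbound⟩ := exists_norm_liSum_logDeriv_shiftedZeta₁_le RH
  refine ⟨C, hC, fun n hn ↦ ?_⟩
  have hsum : ∑ l ∈ Finset.Icc 1 n, (n.choose l : ℂ) * η (l - 1) =
      -liSum n (logDeriv shiftedZeta₁) := by
    rw [← liSum_neg, ← liSum_congr hlogDeriv, sum_Icc_one_choose_mul, liSum]
    simp only [hη]
  rw [hsum, norm_neg]
  exact hbound n hn
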